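/- arXiv:math/0408031 — 5 statements merged into one kernel-verified Lean document; each statement's English description precedes it below -/
import Mathlib

section
/- For every n ≥ 1 and every 1 ≤ k ≤ n, the number of n-cyclations with exactly k cycles satisfies ⟦n,k⟧ = 2^{n−k}·[n,k], where [n,k] is the unsigned Stirling number of the first kind. -/
/-- The fixed involution pairing the two endpoints of each interval:
endpoint `2m` is paired with endpoint `2m+1`. -/
def intervalPerm (n : ℕ) : Equiv.Perm (Fin (2 * n)) :=
  Function.Involutive.toPerm
    (fun x => ⟨if x.1 % 2 = 0 then x.1 + 1 else x.1 - 1, by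
      have := x.2; split <;> omega⟩)
    (fun x => by
      have := x.2
      ext
      simp only
      split_ifs <;> omega)

/-- An `n`-cyclation: a fixed-point-free involution (perfect matching) on the `2*n`
endpoints of the `n` intervals. -/
def Cyclation (n : ℕ) : Type :=
  {μ : Equiv.Perm (Fin (2 * n)) // (∀ x, μ x ≠ x) ∧ μ * μ = 1}

instance (n : ℕ) : Finite (Cyclation n) := Subtype.finite

noncomputable instance (n : ℕ) : Fintype (Cyclation n) := Fintype.ofFinite _

/-- The subgroup generated by the matching and the interval pairing; its orbits on the
endpoints are exactly the connected components (cycles) of the cyclation, viewed as the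
multigraph whose edges are the intervals together with the matched pairs. -/
def cycGroup {n : ℕ} (c : Cyclation n) : Subgroup (Equiv.Perm (Fin (2 * n))) :=
  Subgroup.closure {c.1, intervalPerm n}

/-- Number of cycles of a cyclation: the number of connected components, i.e. the number
of orbits of `cycGroup c` on the endpoints. -/
noncomputable def cycNumCycles {n : ℕ} (c : Cyclation n) : ℕ :=
  Nat.card (MulAction.orbitRel.Quotient (cycGroup c) (Fin (2 * n)))

/-- Number of cycles of length `l` of a cyclation (a cycle containing `l` intervals is a
connected component with `2*l` endpoints). -/
noncomputable def cycNumCyclesOfLength {n : ℕ} (c : Cyclation n) (l : ℕ) : ℕ :=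
  Nat.card {q : MulAction.orbitRel.Quotient (cycGroup c) (Fin (2 * n)) // q.orbit.ncard = 2 * l}

/-- Length (number of intervals) of the longest cycle of a cyclation. -/
noncomputable def longestCycle {n : ℕ} (c : Cyclation n) : ℕ :=
  (Finset.univ.sup fun x : Fin (2 * n) => (MulAction.orbit (cycGroup c) x).ncard) / 2

/-- Length (number of intervals) of the shortest cycle of a cyclation. -/
noncomputable def shortestCycle {n : ℕ} (c : Cyclation n) : ℕ :=
  sInf (Set.range fun x : Fin (2 * n) => (MulAction.orbit (cycGroup c) x).ncard / 2)

/-- `⟦n,k⟧`: the number of `n`-cyclations with exactly `k` cycles. -/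
noncomputable def cyclationCount (n k : ℕ) : ℕ :=
  Nat.card {c : Cyclation n // cycNumCycles c = k}

/-- Number of cycles (orbits, including fixed points) of a permutation. -/
noncomputable def permCycleCount {m : ℕ} (σ : Equiv.Perm (Fin m)) : ℕ :=
  Nat.card (MulAction.orbitRel.Quotient (Subgroup.zpowers σ) (Fin m))

/-- `[n,k]`: the unsigned Stirling number of the first kind, i.e. the number of
permutations of an `n`-element set with exactly `k` cycles. -/
noncomputable def stirlingFirst (n k : ℕ) : ℕ :=
  Nat.card {σ : Equiv.Perm (Fin n) // permCycleCount σ = k}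

open Equiv in
/-- Colourings constant under a set of permutations: `2 ^ (number of orbits)` many. -/
theorem cyl_card_inv {X : Type} [Finite X] (S : Set (Perm X)) :
    Nat.card {f : X → Bool // ∀ s ∈ S, ∀ x, f (s x) = f x} =
      2 ^ Nat.card (MulAction.orbitRel.Quotient (Subgroup.closure S) X) := by
  classical
  have e : {f : X → Bool // ∀ s ∈ S, ∀ x, f (s x) = f x} ≃
      (MulAction.orbitRel.Quotient (Subgroup.closure S) X → Bool) := by
    refine
      { toFun := fun f => Quotient.lift f.1 ?_
        invFun := fun h => ⟨fun x => h (Quotient.mk _ x), ?_⟩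
        left_inv := ?_
        right_inv := ?_ }
    · rintro a b ⟨⟨g, hg⟩, rfl⟩
      change f.1 (g b) = f.1 b
      induction hg using Subgroup.closure_induction generalizing b with
      | mem s hs => exact f.2 s hs b
      | one => rfl
      | mul s t _ _ h1 h2 => rw [Perm.mul_apply, h1, h2]
      | inv s _ h => rw [← h (s⁻¹ b)]; simp
    · intro s hs x
      refine congrArg h (Quotient.sound ?_)
      exact ⟨⟨s, Subgroup.subset_closure hs⟩, rfl⟩
    · intro f
      rfl
    · intro h
      funext q
      induction q using Quotient.inductionOn
      rfl
  rw [Nat.card_congr e, Nat.card_fun]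
  simp

/-- number of colourings invariant under a permutation -/
noncomputable def cylInvOne {X : Type} (σ : Equiv.Perm X) : ℕ :=
  Nat.card {f : X → Bool // ∀ x, f (σ x) = f x}

/-- number of colourings invariant under two permutations -/
noncomputable def cylInvTwo {X : Type} (μ τ : Equiv.Perm X) : ℕ :=
  Nat.card {f : X → Bool // (∀ x, f (μ x) = f x) ∧ ∀ x, f (τ x) = f x}

/-- perfect matchings -/
abbrev CylMatch (X : Type) : Type :=
  {μ : Equiv.Perm X // (∀ x, μ x ≠ x) ∧ μ * μ = 1}

theorem cylInvOne_eq {m : ℕ} (σ : Equiv.Perm (Fin m)) :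
    cylInvOne σ = 2 ^ permCycleCount σ := by
  unfold permCycleCount
  rw [Subgroup.zpowers_eq_closure, ← cyl_card_inv]
  simp [cylInvOne]

theorem cylInvTwo_eq {n : ℕ} (c : Cyclation n) :
    cylInvTwo c.1 (intervalPerm n) = 2 ^ cycNumCycles c := by
  unfold cycNumCycles cycGroup
  rw [← cyl_card_inv]
  simp [cylInvTwo]

open Equiv

theorem cylInvOne_transport {X Y : Type} (e : X ≃ Y) (σ : Perm X) :
    cylInvOne (e.permCongr σ) = cylInvOne σ := by
  refine Nat.card_congr (Equiv.subtypeEquiv (e.symm.arrowCongr (Equiv.refl Bool)) ?_)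
  intro f
  simp only [Equiv.arrowCongr_apply, Equiv.permCongr_apply]
  constructor
  · intro h x; simpa using h (e x)
  · intro h x; simpa using h (e.symm x)

theorem cylInvTwo_transport {X Y : Type} (e : X ≃ Y) (σ τ : Perm X) :
    cylInvTwo (e.permCongr σ) (e.permCongr τ) = cylInvTwo σ τ := by
  refine Nat.card_congr (Equiv.subtypeEquiv (e.symm.arrowCongr (Equiv.refl Bool)) ?_)
  intro f
  simp only [Equiv.arrowCongr_apply, Equiv.permCongr_apply]
  constructor
  · rintro ⟨h, h'⟩
    exact ⟨fun x => by simpa using h (e x), fun x => by simpa using h' (e x)⟩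
  · rintro ⟨h, h'⟩
    exact ⟨fun x => by simpa using h (e.symm x), fun x => by simpa using h' (e.symm x)⟩

theorem cylInvOne_none {X : Type} (σ : Perm X) :
    cylInvOne (optionCongr σ) = 2 * cylInvOne σ := by
  have e : {f : Option X → Bool // ∀ x, f (optionCongr σ x) = f x} ≃
      Bool × {f : X → Bool // ∀ x, f (σ x) = f x} :=
    { toFun := fun f => (f.1 none, ⟨fun x => f.1 (some x), fun x => by simpa using f.2 (some x)⟩)
      invFun := fun f => ⟨fun o => o.elim f.1 f.2.1, by
        rintro (_ | x)
        · rfl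
        · simpa using f.2.2 x⟩
      left_inv := by
        rintro ⟨f, hf⟩
        ext o
        cases o <;> rfl
      right_inv := fun f => rfl }
  unfold cylInvOne
  rw [Nat.card_congr e, Nat.card_prod]
  simp

theorem cylInvOne_some {X : Type} [DecidableEq X] (σ : Perm X) (a : X) :
    cylInvOne (swap none (some a) * optionCongr σ) = cylInvOne σ := by
  refine Nat.card_congr
    { toFun := fun f => ⟨fun x => f.1 (some x), ?_⟩
      invFun := fun f => ⟨fun o => o.elim (f.1 a) f.1, ?_⟩
      left_inv := ?_
      right_inv := fun f => rfl }
  · intro x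
    have h0 := f.2 none
    have h1 := f.2 (some x)
    by_cases h : σ x = a
    · simp [h] at h0 h1 ⊢
      rw [h0, h1]
    · rw [Perm.mul_apply, swap_apply_of_ne_of_ne (by simp) (by simpa using h)] at h1
      simpa using h1
  · rintro (_ | x)
    · simp
    · have h1 := f.2 x
      by_cases h : σ x = a
      · simp [h] at h1 ⊢
        exact h1
      · rw [Perm.mul_apply, swap_apply_of_ne_of_ne (by simp) (by simpa using h)]
        simpa using h1
  · rintro ⟨f, hf⟩
    ext o
    cases o with
    | none =>
      have := hf none
      simp at this
      simpa using this
    | some x => rfl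

theorem cyl_perm_rec (X : Type) [Fintype X] [DecidableEq X] [Fintype (Perm X)]
    [Fintype (Perm (Option X))] (g : ℕ → ℕ) :
    ∑ σ : Perm (Option X), g (cylInvOne σ) =
      Fintype.card X * ∑ σ : Perm X, g (cylInvOne σ) + ∑ σ : Perm X, g (2 * cylInvOne σ) := by
  rw [← Equiv.sum_comp (Equiv.Perm.decomposeOption (α := X)).symm, Fintype.sum_prod_type,
    Fintype.sum_option]
  simp only [Perm.decomposeOption_symm_apply, cylInvOne_some, swap_self]
  simp only [Finset.sum_const, Finset.card_univ, smul_eq_mul]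
  rw [add_comm]
  congr 1
  refine Finset.sum_congr rfl fun σ _ => ?_
  rw [← cylInvOne_none]
  rfl

/-- the pairing with one more interval -/
def cylExt {X : Type} [DecidableEq X] (τ : Perm X) : Perm (Option (Option X)) :=
  swap none (some none) * optionCongr (optionCongr τ)

@[simp] theorem cylExt_p {X : Type} [DecidableEq X] (τ : Perm X) :
    cylExt τ none = some none := by simp [cylExt]

@[simp] theorem cylExt_q {X : Type} [DecidableEq X] (τ : Perm X) :
    cylExt τ (some none) = none := by simp [cylExt]

@[simp] theorem cylExt_x {X : Type} [DecidableEq X] (τ : Perm X) (x : X) :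
    cylExt τ (some (some x)) = some (some (τ x)) := by
  rw [cylExt, Perm.mul_apply, swap_apply_of_ne_of_ne (by simp) (by simp)]
  simp

/-- all matchings on the extended set -/
def cylGlue {X : Type} [DecidableEq X] (o : Option X) (μ : Perm X) : Perm (Option (Option X)) :=
  swap (some none) (some o) * cylExt μ * swap (some none) (some o)

@[simp] theorem cylGlue_p {X : Type} [DecidableEq X] (o : Option X) (μ : Perm X) :
    cylGlue o μ none = some o := by
  rw [cylGlue, Perm.mul_apply, Perm.mul_apply, swap_apply_of_ne_of_ne (x := none) (by simp) (by simp)]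
  simp

theorem cylGlue_none {X : Type} [DecidableEq X] (μ : Perm X) :
    cylGlue none μ = cylExt μ := by
  ext1 x
  simp [cylGlue]

theorem cylExt_match {X : Type} [DecidableEq X] (μ : Perm X)
    (h : (∀ x, μ x ≠ x) ∧ μ * μ = 1) :
    (∀ x, cylExt μ x ≠ x) ∧ cylExt μ * cylExt μ = 1 := by
  constructor
  · rintro (_ | _ | x)
    · simp
    · simp
    · simpa using h.1 x
  · ext1 x
    rcases x with (_ | _ | x)
    · simp
    · simp
    · have := congrArg (fun s : Perm X => s x) h.2
      simpa using this

theorem cyl_conj_match {X : Type} [DecidableEq X] (μ : Perm X) (a b : X)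
    (h : (∀ x, μ x ≠ x) ∧ μ * μ = 1) :
    (∀ x, (swap a b * μ * swap a b) x ≠ x) ∧
      (swap a b * μ * swap a b) * (swap a b * μ * swap a b) = 1 := by
  constructor
  · intro x hx
    apply h.1 (swap a b x)
    have := congrArg (swap a b) hx
    simpa using this
  · have h1 : swap a b * swap a b = 1 := swap_mul_self a b
    calc _ = swap a b * μ * (swap a b * swap a b) * μ * swap a b := by group
      _ = swap a b * (μ * μ) * swap a b := by rw [h1]; group
      _ = 1 := by rw [h.2, mul_one, h1]

theorem cylExt_injective {X : Type} [DecidableEq X] :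
    Function.Injective (cylExt (X := X)) := by
  intro μ ν h
  ext1 x
  have := congrArg (fun s : Perm (Option (Option X)) => s (some (some x))) h
  simpa using this

theorem cylExt_surj {X : Type} [DecidableEq X] (ν : Perm (Option (Option X)))
    (h : (∀ x, ν x ≠ x) ∧ ν * ν = 1) (hp : ν none = some none) :
    ∃ μ : CylMatch X, cylExt μ.1 = ν := by
  have hinv : ∀ x, ν (ν x) = x := fun x => by
    simpa using congrArg (fun s : Perm (Option (Option X)) => s x) h.2
  have hq : ν (some none) = none := by rw [← hp, hinv]
  obtain ⟨ρ, hρ⟩ : ∃ ρ, ρ = swap none (some none) * ν := ⟨_, rfl⟩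
  have h1 : optionCongr (removeNone ρ) = ρ := by
    rw [map_equiv_removeNone]
    have : ρ none = none := by simp [hρ, hp]
    rw [this]
    ext1; simp
  have h2 : optionCongr (removeNone (removeNone ρ)) = removeNone ρ := by
    rw [map_equiv_removeNone]
    have : removeNone ρ none = none := by
      have h3 : optionCongr (removeNone ρ) (some none) = some none := by
        rw [h1]; simp [hρ, hq]
      rw [Equiv.optionCongr_apply] at h3
      exact Option.some_injective _ h3
    rw [this]
    ext1; simp
  have key : cylExt (removeNone (removeNone ρ)) = ν := by
    rw [cylExt, h2, h1, hρ, ← mul_assoc, swap_mul_self, one_mul]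
  have hx : ∀ x, ν (some (some x)) = some (some (removeNone (removeNone ρ) x)) := by
    intro x
    rw [← cylExt_x, key]
  refine ⟨⟨removeNone (removeNone ρ), ?_, ?_⟩, key⟩
  · intro x hx'
    apply h.1 (some (some x))
    rw [hx, hx']
  · ext1 x
    have := hinv (some (some x))
    rw [hx, hx] at this
    simpa using this

/-- the glueing map -/
def cylGlueMap {X : Type} [DecidableEq X] (y : Option X × CylMatch X) :
    CylMatch (Option (Option X)) :=
  ⟨cylGlue y.1 y.2.1, cyl_conj_match _ _ _ (cylExt_match _ y.2.2)⟩

theorem cylGlueMap_bij {X : Type} [DecidableEq X] :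
    Function.Bijective (cylGlueMap (X := X)) := by
  constructor
  · rintro ⟨o, μ⟩ ⟨o', μ'⟩ h
    have h : cylGlue o μ.1 = cylGlue o' μ'.1 := congrArg Subtype.val h
    have ho : o = o' := by
      have := congrArg (fun s : Perm (Option (Option X)) => s none) h
      simpa using this
    subst ho
    have : cylExt μ.1 = cylExt μ'.1 := by simpa [cylGlue] using h
    rw [Subtype.ext (cylExt_injective this)]
  · rintro ⟨ν, hν⟩
    obtain ⟨o, ho⟩ : ∃ o, ν none = some o := by
      rcases h : ν none with _ | o
      · exact absurd h (hν.1 none)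
      · exact ⟨o, rfl⟩
    obtain ⟨μ, hμ⟩ := cylExt_surj _ (cyl_conj_match ν (some none) (some o) hν) (by
      rw [Perm.mul_apply, Perm.mul_apply, swap_apply_of_ne_of_ne (x := none) (by simp) (by simp), ho]
      simp)
    refine ⟨(o, μ), Subtype.ext ?_⟩
    change cylGlue o μ.1 = ν
    rw [cylGlue, hμ]
    ext1 x
    simp

theorem cylInvTwo_none {X : Type} [DecidableEq X] (μ τ : Perm X) :
    cylInvTwo (cylGlue none μ) (cylExt τ) = 2 * cylInvTwo μ τ := by
  rw [cylGlue_none]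
  have e : {f : Option (Option X) → Bool // (∀ x, f (cylExt μ x) = f x) ∧
        ∀ x, f (cylExt τ x) = f x} ≃
      Bool × {f : X → Bool // (∀ x, f (μ x) = f x) ∧ ∀ x, f (τ x) = f x} :=
    { toFun := fun f => (f.1 none, ⟨fun x => f.1 (some (some x)),
        fun x => by simpa using f.2.1 (some (some x)),
        fun x => by simpa using f.2.2 (some (some x))⟩)
      invFun := fun f => ⟨fun o => o.elim f.1 (fun o => o.elim f.1 f.2.1), by
        constructor
        · rintro (_ | _ | x)
          · simp
          · simp
          · simpa using f.2.2.1 x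
        · rintro (_ | _ | x)
          · simp
          · simp
          · simpa using f.2.2.2 x⟩
      left_inv := by
        rintro ⟨f, hf, hf'⟩
        ext o
        rcases o with (_ | _ | x)
        · rfl
        · simpa using hf (some none)
        · rfl
      right_inv := fun f => rfl }
  unfold cylInvTwo
  rw [Nat.card_congr e, Nat.card_prod]
  simp

theorem cylGlue_q {X : Type} [DecidableEq X] (μ : Perm X) (a : X) (h : μ a ≠ a) :
    cylGlue (some a) μ (some none) = some (some (μ a)) := by
  rw [cylGlue, Perm.mul_apply, Perm.mul_apply, swap_apply_left, cylExt_x,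
    swap_apply_of_ne_of_ne (by simp) (by simpa using h)]

theorem cylGlue_a {X : Type} [DecidableEq X] (μ : Perm X) (a : X) :
    cylGlue (some a) μ (some (some a)) = none := by
  rw [cylGlue, Perm.mul_apply, Perm.mul_apply, swap_apply_right, cylExt_q,
    swap_apply_of_ne_of_ne (by simp) (by simp)]

theorem cylGlue_b {X : Type} [DecidableEq X] (μ : Perm X) (a x : X) (h : x ≠ a) (hx : μ x = a) :
    cylGlue (some a) μ (some (some x)) = some none := by
  rw [cylGlue, Perm.mul_apply, Perm.mul_apply,
    swap_apply_of_ne_of_ne (x := some (some x)) (by simp) (by simpa using h), cylExt_x, hx, swap_apply_right]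

theorem cylGlue_x {X : Type} [DecidableEq X] (μ : Perm X) (a x : X) (h : x ≠ a) (hx : μ x ≠ a) :
    cylGlue (some a) μ (some (some x)) = some (some (μ x)) := by
  rw [cylGlue, Perm.mul_apply, Perm.mul_apply,
    swap_apply_of_ne_of_ne (x := some (some x)) (by simp) (by simpa using h), cylExt_x,
    swap_apply_of_ne_of_ne (by simp) (by simpa using hx)]

theorem cylInvTwo_some {X : Type} [DecidableEq X] (μ τ : Perm X) (a : X)
    (hμ : (∀ x, μ x ≠ x) ∧ μ * μ = 1) :
    cylInvTwo (cylGlue (some a) μ) (cylExt τ) = cylInvTwo μ τ := by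
  refine Nat.card_congr
    { toFun := fun f => ⟨fun x => f.1 (some (some x)), ?_, fun x => by
        simpa using f.2.2 (some (some x))⟩
      invFun := fun f => ⟨fun o => o.elim (f.1 a) (fun o => o.elim (f.1 a) f.1), ?_, ?_⟩
      left_inv := ?_
      right_inv := fun f => rfl }
  · intro x
    have hp := f.2.1 none
    have hq := f.2.1 (some none)
    have hpq := f.2.2 none
    have hx := f.2.1 (some (some x))
    rw [cylGlue_p] at hp
    rw [cylGlue_q _ _ (hμ.1 a)] at hq
    rw [cylExt_p] at hpq
    change f.1 (some (some (μ x))) = f.1 (some (some x))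
    by_cases h : x = a
    · subst h
      rw [hq, hpq, hp]
    · by_cases h' : μ x = a
      · rw [cylGlue_b _ _ _ h h'] at hx
        rw [h', hp, ← hpq, hx]
      · rwa [cylGlue_x _ _ _ h h'] at hx
  · rintro (_ | _ | x)
    · rw [cylGlue_p]; rfl
    · rw [cylGlue_q _ _ (hμ.1 a)]
      exact f.2.1 a
    · have hx := f.2.1 x
      by_cases h : x = a
      · subst h
        rw [cylGlue_a]; rfl
      · by_cases h' : μ x = a
        · rw [cylGlue_b _ _ _ h h']
          rw [h'] at hx
          exact hx
        · rw [cylGlue_x _ _ _ h h']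
          exact hx
  · rintro (_ | _ | x)
    · simp
    · simp
    · simpa using f.2.2 x
  · rintro ⟨f, hf, hf'⟩
    have hp := hf none
    have hpq := hf' none
    rw [cylGlue_p] at hp
    rw [cylExt_p] at hpq
    ext o
    rcases o with (_ | _ | x)
    · simpa using hp
    · simp [hpq, hp]
    · rfl

theorem cyl_match_rec (X : Type) [Fintype X] [DecidableEq X] [Fintype (CylMatch X)]
    [Fintype (CylMatch (Option (Option X)))] (τ : Perm X) (g : ℕ → ℕ) :
    ∑ μ : CylMatch (Option (Option X)), g (cylInvTwo μ.1 (cylExt τ)) =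
      Fintype.card X * ∑ μ : CylMatch X, g (cylInvTwo μ.1 τ) +
        ∑ μ : CylMatch X, g (2 * cylInvTwo μ.1 τ) := by
  rw [← Equiv.sum_comp (Equiv.ofBijective _ (cylGlueMap_bij (X := X))), Fintype.sum_prod_type,
    Fintype.sum_option]
  simp only [Equiv.ofBijective_apply, cylGlueMap, cylInvTwo_none]
  rw [add_comm]
  congr 1
  rw [← smul_eq_mul, ← Finset.card_univ, ← Finset.sum_const]
  refine Finset.sum_congr rfl fun a _ => Finset.sum_congr rfl fun μ _ => ?_
  rw [cylInvTwo_some _ _ _ μ.2]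

theorem cyl_match_transport {X Y : Type} [Fintype (CylMatch X)] [Fintype (CylMatch Y)] (e : X ≃ Y) (τ : Perm X)
    (g : ℕ → ℕ) :
    ∑ μ : CylMatch Y, g (cylInvTwo μ.1 (e.permCongr τ)) =
      ∑ μ : CylMatch X, g (cylInvTwo μ.1 τ) := by
  symm
  refine Fintype.sum_equiv (Equiv.subtypeEquiv e.permCongr ?_) _ _ ?_
  · intro μ
    constructor
    · rintro ⟨h, h'⟩
      refine ⟨fun x hx => h (e.symm x) ?_, ?_⟩
      · rw [Equiv.permCongr_apply] at hx
        rwa [← Equiv.eq_symm_apply] at hx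
      · ext1 x
        have := congrArg (fun s : Perm X => e (s (e.symm x))) h'
        simpa using this
    · rintro ⟨h, h'⟩
      refine ⟨fun x hx => h (e x) ?_, ?_⟩
      · simp [hx]
      · ext1 x
        have := congrArg (fun s : Perm Y => (s (e x))) h'
        simpa using this
  · intro μ
    simp only [Equiv.subtypeEquiv_apply, cylInvTwo_transport]

/-- splitting off the last interval -/
def cylSplit (n : ℕ) : Fin (2 * (n + 1)) ≃ Option (Option (Fin (2 * n))) :=
  (finSuccEquivLast (n := 2 * n + 1)).trans (optionCongr (finSuccEquivLast (n := 2 * n)))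

theorem cylSplit_symm_p (n : ℕ) : ((cylSplit n).symm none).1 = 2 * n + 1 := by
  change (finSuccEquivLast.symm none : Fin (2 * n + 1 + 1)).1 = _
  simp

theorem cylSplit_symm_q (n : ℕ) : ((cylSplit n).symm (some none)).1 = 2 * n := by
  change (finSuccEquivLast.symm (some (finSuccEquivLast.symm none)) : Fin (2 * n + 1 + 1)).1 = _
  simp

theorem cylSplit_symm_x (n : ℕ) (x : Fin (2 * n)) :
    ((cylSplit n).symm (some (some x))).1 = x.1 := by
  change (finSuccEquivLast.symm (some (finSuccEquivLast.symm (some x))) : Fin (2 * n + 1 + 1)).1 = _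
  simp

theorem intervalPerm_val (n : ℕ) (x : Fin (2 * n)) :
    (intervalPerm n x).1 = if x.1 % 2 = 0 then x.1 + 1 else x.1 - 1 := rfl

theorem cylSplit_interval (n : ℕ) :
    (cylSplit n).permCongr (intervalPerm (n + 1)) = cylExt (intervalPerm n) := by
  ext1 x
  rw [Equiv.permCongr_apply, ← Equiv.eq_symm_apply]
  apply Fin.ext
  rw [intervalPerm_val]
  rcases x with (_ | _ | x)
  · rw [cylExt_p, cylSplit_symm_p, cylSplit_symm_q]
    split_ifs <;> omega
  · rw [cylExt_q, cylSplit_symm_p, cylSplit_symm_q]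
    split_ifs <;> omega
  · rw [cylExt_x, cylSplit_symm_x, cylSplit_symm_x, intervalPerm_val]

open scoped Classical in
theorem cyl_main (n : ℕ) : ∀ g : ℕ → ℕ,
    ∑ μ : CylMatch (Fin (2 * n)),
        g (cylInvTwo μ.1 (intervalPerm n)) * cylInvTwo μ.1 (intervalPerm n) =
      2 ^ n * ∑ σ : Perm (Fin n), g (cylInvOne σ) := by
  induction n with
  | zero =>
    intro g
    have : IsEmpty (Fin (2 * 0)) := inferInstanceAs (IsEmpty (Fin 0))
    have : Unique (CylMatch (Fin (2 * 0))) :=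
      { default := ⟨1, fun x => isEmptyElim x, by simp⟩
        uniq := fun a => Subtype.ext (Subsingleton.elim _ _) }
    rw [Fintype.sum_unique, Fintype.sum_unique]
    have h1 : ∀ σ τ : Perm (Fin (2 * 0)), cylInvTwo σ τ = 1 := by
      intro σ τ
      simp [cylInvTwo]
    have h2 : ∀ σ : Perm (Fin 0), cylInvOne σ = 1 := by
      intro σ
      simp [cylInvOne]
    rw [h1, h2]
    simp
  | succ n ih =>
    intro g
    rw [← cyl_match_transport (cylSplit n) (intervalPerm (n + 1)) (fun m => g m * m),
      cylSplit_interval, cyl_match_rec _ _ (fun m => g m * m), ih g]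
    have h1 : ∑ σ : Perm (Fin (n + 1)), g (cylInvOne σ) =
        ∑ σ : Perm (Option (Fin n)), g (cylInvOne σ) :=
      Fintype.sum_equiv (finSuccEquivLast (n := n)).permCongr _ _
        (fun σ => by rw [cylInvOne_transport])
    rw [h1, cyl_perm_rec]
    have h2 := ih (fun m => g (2 * m))
    have h3 : ∀ μ : CylMatch (Fin (2 * n)),
        g (2 * cylInvTwo μ.1 (intervalPerm n)) * (2 * cylInvTwo μ.1 (intervalPerm n)) =
        2 * (g (2 * cylInvTwo μ.1 (intervalPerm n)) * cylInvTwo μ.1 (intervalPerm n)) :=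
      fun μ => by ring
    simp only [h3]
    rw [← Finset.mul_sum, h2]
    simp only [Fintype.card_fin]
    ring

/-- For every `n ≥ 1` and `1 ≤ k ≤ n`, the number of `n`-cyclations with exactly `k`
cycles satisfies `⟦n,k⟧ = 2^(n-k) * [n,k]`. -/
theorem cyclationCount_eq_two_pow_mul_stirling (n k : ℕ) (hn : 1 ≤ n) (hk1 : 1 ≤ k)
    (hkn : k ≤ n) :
    cyclationCount n k = 2 ^ (n - k) * stirlingFirst n k := by
  classical
  have h := cyl_main n (fun m => if m = 2 ^ k then 1 else 0)
  have hC : cyclationCount n k = ∑ μ : CylMatch (Fin (2 * n)),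
      if cylInvTwo μ.1 (intervalPerm n) = 2 ^ k then 1 else 0 := by
    unfold cyclationCount
    rw [← Finset.card_filter, ← Fintype.card_subtype, ← Nat.card_eq_fintype_card]
    refine Nat.card_congr (Equiv.subtypeEquivRight fun c => ?_)
    rw [cylInvTwo_eq c]
    exact (Nat.pow_right_injective (le_refl 2)).eq_iff.symm
  have hS : stirlingFirst n k = ∑ σ : Perm (Fin n),
      if cylInvOne σ = 2 ^ k then 1 else 0 := by
    unfold stirlingFirst
    rw [← Finset.card_filter, ← Fintype.card_subtype, ← Nat.card_eq_fintype_card]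
    refine Nat.card_congr (Equiv.subtypeEquivRight fun c => ?_)
    rw [cylInvOne_eq c]
    exact (Nat.pow_right_injective (le_refl 2)).eq_iff.symm
  rw [← hS] at h
  have h4 : ∀ m : ℕ, (if m = 2 ^ k then 1 else 0) * m = 2 ^ k * (if m = 2 ^ k then 1 else 0) := by
    intro m
    split_ifs with hm
    · simp [hm]
    · simp
  simp only [h4] at h
  rw [← Finset.mul_sum, ← hC] at h
  apply Nat.eq_of_mul_eq_mul_left (show 0 < 2 ^ k by positivity)
  rw [h, ← mul_assoc, ← pow_add, Nat.add_sub_cancel' hkn]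
end

section
/- For every n ≥ 1 and 1 ≤ k ≤ n, the number ⟦n,k⟧ of n-cyclations with exactly k cycles equals the sum, over all cycle structures (i_1,…,i_n) with ∑_{l=1}^{n} l·i_l = n and ∑_{l=1}^{n} i_l = k, of n!·2^n / ∏_{l=1}^{n} ((2l)^{i_l}·i_l!). -/
namespace CycAux

open Equiv

/-- Fixed-point-free involutions. -/
def Mat (X : Type) : Type := {μ : Perm X // (∀ x, μ x ≠ x) ∧ μ * μ = 1}

/-- Two-colourings invariant under both permutations. -/
def Inv {X : Type} (τ μ : Perm X) : Type :=
  {f : X → Bool // (∀ x, f (μ x) = f x) ∧ ∀ x, f (τ x) = f x}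

/-- Number of matchings with `k` components. -/
noncomputable def P (X : Type) (τ : Perm X) (k : ℕ) : ℕ :=
  Nat.card {μ : Mat X // Nat.card (Inv τ μ.1) = 2 ^ k}

instance (X : Type) [Finite X] : Finite (Mat X) := Subtype.finite
instance (X : Type) [Finite X] (τ μ : Perm X) : Finite (Inv τ μ) := Subtype.finite

theorem inv_closure {X : Type} {τ μ : Perm X} (f : Inv τ μ) (g : Perm X)
    (hg : g ∈ Subgroup.closure {μ, τ}) : ∀ x, f.1 (g x) = f.1 x := by
  induction hg using Subgroup.closure_induction with
  | mem g h =>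
    rcases h with rfl | rfl
    · exact f.2.1
    · exact f.2.2
  | one => simp
  | mul a b _ _ ha hb => intro x; rw [Perm.mul_apply, ha, hb]
  | inv a _ ha => intro x; rw [← ha]; simp

theorem card_inv {n : ℕ} (c : Cyclation n) :
    Nat.card (Inv (intervalPerm n) c.1) = 2 ^ cycNumCycles c := by
  have e : Inv (intervalPerm n) c.1 ≃
      (MulAction.orbitRel.Quotient (cycGroup c) (Fin (2 * n)) → Bool) :=
    { toFun := fun f => Quotient.lift f.1 (by
        rintro a b ⟨g, rfl⟩
        exact inv_closure f g.1 g.2 b)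
      invFun := fun h => ⟨fun x => h (Quotient.mk _ x), by
        constructor
        · intro x
          refine congrArg h (Quotient.sound ?_)
          exact ⟨⟨c.1, Subgroup.subset_closure (by simp)⟩, rfl⟩
        · intro x
          refine congrArg h (Quotient.sound ?_)
          exact ⟨⟨intervalPerm n, Subgroup.subset_closure (by simp)⟩, rfl⟩⟩
      left_inv := fun f => rfl
      right_inv := fun h => by
        funext q
        induction q using Quotient.inductionOn
        rfl }
  rw [Nat.card_congr e, Nat.card_fun]
  simp [cycNumCycles]

theorem count_eq (n k : ℕ) : cyclationCount n k = P (Fin (2 * n)) (intervalPerm n) k := by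
  unfold cyclationCount P
  apply Nat.card_congr
  refine Equiv.subtypeEquivRight (p := fun c : Cyclation n => cycNumCycles c = k)
    (q := fun c : Cyclation n => Nat.card (Inv (intervalPerm n) c.1) = 2 ^ k) ?_
  intro c
  rw [card_inv]
  exact (Nat.pow_right_injective le_rfl).eq_iff.symm

theorem conj_mat {X Y : Type} (e : X ≃ Y) (μ : Perm X) (h : (∀ x, μ x ≠ x) ∧ μ * μ = 1) :
    (∀ x, e.permCongr μ x ≠ x) ∧ e.permCongr μ * e.permCongr μ = 1 := by
  constructor
  · intro x hx
    apply h.1 (e.symm x)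
    rw [Equiv.permCongr_apply] at hx
    rw [Equiv.eq_symm_apply, hx]
  · ext x
    have := congrArg (fun g : Perm X => g (e.symm x)) h.2
    simp only [Perm.mul_apply, Perm.one_apply] at this
    simp [this]

theorem inv_conj {X Y : Type} (e : X ≃ Y) (τ μ : Perm X) :
    Nat.card (Inv (e.permCongr τ) (e.permCongr μ)) = Nat.card (Inv τ μ) := by
  apply Nat.card_congr
  exact
    { toFun := fun f => ⟨fun x => f.1 (e x), by
        constructor
        · intro x
          simpa using f.2.1 (e x)
        · intro x
          simpa using f.2.2 (e x)⟩
      invFun := fun f => ⟨fun x => f.1 (e.symm x), by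
        constructor
        · intro x
          simpa using f.2.1 (e.symm x)
        · intro x
          simpa using f.2.2 (e.symm x)⟩
      left_inv := fun f => by apply Subtype.ext; funext x; simp
      right_inv := fun f => by apply Subtype.ext; funext x; simp }

theorem P_congr {X Y : Type} (e : X ≃ Y) (τ : Perm X) (k : ℕ) :
    P Y (e.permCongr τ) k = P X τ k := by
  symm
  apply Nat.card_congr
  have E : Mat X ≃ Mat Y :=
    { toFun := fun μ => ⟨e.permCongr μ.1, conj_mat e μ.1 μ.2⟩
      invFun := fun μ => ⟨e.symm.permCongr μ.1, conj_mat e.symm μ.1 μ.2⟩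
      left_inv := fun μ => by apply Subtype.ext; ext x; simp
      right_inv := fun μ => by apply Subtype.ext; ext x; simp }
  refine Equiv.subtypeEquiv
    { toFun := fun μ => ⟨e.permCongr μ.1, conj_mat e μ.1 μ.2⟩
      invFun := fun μ => ⟨e.symm.permCongr μ.1, conj_mat e.symm μ.1 μ.2⟩
      left_inv := fun μ => by apply Subtype.ext; ext x; simp
      right_inv := fun μ => by apply Subtype.ext; ext x; simp } ?_
  intro μ
  change _ ↔ Nat.card (Inv (e.permCongr τ) (e.permCongr μ.1)) = _
  rw [inv_conj]

/-- Extension of a permutation by a new swapped pair. -/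
def extFun {X : Type} (μ : X → X) : Option (Option X) → Option (Option X)
  | none => some none
  | some none => none
  | some (some x) => some (some (μ x))

def extPair {X : Type} (μ : Perm X) : Perm (Option (Option X)) where
  toFun := extFun μ
  invFun := extFun μ.symm
  left_inv := by rintro (_ | _ | x) <;> simp [extFun]
  right_inv := by rintro (_ | _ | x) <;> simp [extFun]

@[simp] theorem extPair_none {X : Type} (μ : Perm X) : extPair μ none = some none := rfl
@[simp] theorem extPair_some_none {X : Type} (μ : Perm X) : extPair μ (some none) = none := rfl
@[simp] theorem extPair_some {X : Type} (μ : Perm X) (x : X) :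
    extPair μ (some (some x)) = some (some (μ x)) := rfl

theorem extPair_mat {X : Type} (μ : Perm X) (h : (∀ x, μ x ≠ x) ∧ μ * μ = 1) :
    (∀ x, extPair μ x ≠ x) ∧ extPair μ * extPair μ = 1 := by
  constructor
  · rintro (_ | _ | x) <;> simp [h.1]
  · ext1 x
    rcases x with (_ | _ | x)
    · simp
    · simp
    · have := congrArg (fun g : Perm X => g x) h.2
      simp only [Perm.mul_apply, Perm.one_apply] at this
      simp [this]

theorem exists_extPair {X : Type} (ν : Perm (Option (Option X)))
    (h : (∀ x, ν x ≠ x) ∧ ν * ν = 1) (h0 : ν none = some none) :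
    ∃ μ : Mat X, extPair μ.1 = ν := by
  have hh : ∀ x, ν (ν x) = x := fun x => by
    rw [← Perm.mul_apply, h.2, Perm.one_apply]
  have h1 : ν (some none) = none := by rw [← h0, hh]
  have h2 : ∀ x : X, ∃ y : X, ν (some (some x)) = some (some y) := by
    intro x
    rcases hx : ν (some (some x)) with (_ | _ | y)
    · have := hh (some (some x)); rw [hx, h0] at this; simp at this
    · have := hh (some (some x)); rw [hx, h1] at this; simp at this
    · exact ⟨y, rfl⟩
  choose m hm using h2
  have hmm : Function.Involutive m := fun x => by
    have := hh (some (some x)); rw [hm, hm] at this; simpa using this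
  refine ⟨⟨hmm.toPerm, ?_, ?_⟩, ?_⟩
  · intro x hx
    apply h.1 (some (some x))
    rw [hm]
    simpa using hx
  · ext1 x; exact hmm x
  · ext1 x
    rcases x with (_ | _ | x)
    · simp [h0]
    · simp [h1]
    · simp [hm]

section
open Classical

/-- Insert a new interval. -/
noncomputable def ins {X : Type} (p : Option X × Mat X) : Mat (Option (Option X)) :=
  ⟨(swap (some none) (some p.1)).permCongr (extPair p.2.1),
    conj_mat _ _ (extPair_mat _ p.2.2)⟩

theorem ins_none {X : Type} (p : Option X × Mat X) : (ins p).1 none = some p.1 := by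
  simp [ins, swap_apply_of_ne_of_ne]

theorem ins_bij {X : Type} : Function.Bijective (ins (X := X)) := by
  constructor
  · rintro ⟨z, μ⟩ ⟨z', μ'⟩ h
    have h1 := ins_none (z, μ)
    rw [h, ins_none] at h1
    simp only [Option.some.injEq] at h1
    subst h1
    have h2 := congrArg Subtype.val h
    simp only [ins] at h2
    have h3 := (Equiv.injective _ h2)
    congr 1
    apply Subtype.ext
    ext x
    have := congrArg (fun g : Perm (Option (Option X)) => g (some (some x))) h3
    simpa using this
  · intro ν
    rcases hz : ν.1 none with _ | z
    · exact absurd hz (ν.2.1 none)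
    · obtain ⟨μ, hμ⟩ := exists_extPair ((swap (some none) (some z)).permCongr ν.1)
        (conj_mat _ _ ν.2) (by simp [swap_apply_of_ne_of_ne, hz])
      refine ⟨(z, μ), ?_⟩
      apply Subtype.ext
      simp only [ins, hμ]
      ext1 x
      simp

theorem inv_ins_none {X : Type} (τ : Perm X) (μ : Mat X) :
    Nat.card (Inv (extPair τ) (ins (none, μ)).1) = 2 * Nat.card (Inv τ μ.1) := by
  have : (ins (none, μ)).1 = extPair μ.1 := by
    ext1 x; simp [ins]
  rw [this]
  have e : Inv (extPair τ) (extPair μ.1) ≃ Bool × Inv τ μ.1 :=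
    { toFun := fun f => (f.1 none, ⟨fun x => f.1 (some (some x)),
        fun x => f.2.1 (some (some x)), fun x => f.2.2 (some (some x))⟩)
      invFun := fun g => ⟨fun x => match x with
        | none => g.1
        | some none => g.1
        | some (some x) => g.2.1 x, by
          constructor
          · rintro (_ | _ | x)
            · rfl
            · rfl
            · exact g.2.2.1 x
          · rintro (_ | _ | x)
            · rfl
            · rfl
            · exact g.2.2.2 x⟩
      left_inv := fun f => by
        apply Subtype.ext
        funext x
        rcases x with (_ | _ | x)
        · rfl
        · exact (f.2.1 none).symm
        · rfl
      right_inv := fun g => rfl }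
  rw [Nat.card_congr e, Nat.card_prod]
  simp

theorem ins_some_apply {X : Type} (a : X) (μ : Mat X) (x : X) :
    (ins (some a, μ)).1 (some (some x)) =
      if x = a then none else if x = μ.1 a then some none else some (some (μ.1 x)) := by
  have hh : ∀ x, μ.1 (μ.1 x) = x := fun x => by
    rw [← Perm.mul_apply, μ.2.2, Perm.one_apply]
  have hne := μ.2.1
  simp only [ins, permCongr_apply, symm_swap]
  by_cases h : x = a
  · subst h
    simp [swap_apply_of_ne_of_ne]
  · have h0 : swap (some none) (some (some a)) (some (some x)) = some (some x) :=
      swap_apply_of_ne_of_ne (by simp) (by simpa using h)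
    rw [h0]
    simp only [extPair_some, h, if_false]
    by_cases h' : x = μ.1 a
    · subst h'
      simp [hh]
    · have : μ.1 x ≠ a := by
        intro h2; apply h'; rw [← h2, hh]
      rw [swap_apply_of_ne_of_ne (by simp) (by simpa using this)]
      simp [h']

theorem ins_some_none {X : Type} (a : X) (μ : Mat X) :
    (ins (some a, μ)).1 (some none) = some (some (μ.1 a)) := by
  have hne := μ.2.1
  simp only [ins, permCongr_apply, symm_swap]
  rw [swap_apply_left, extPair_some, swap_apply_of_ne_of_ne (by simp) (by simpa using hne a)]

theorem inv_ins_some {X : Type} (τ : Perm X) (a : X) (μ : Mat X) :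
    Nat.card (Inv (extPair τ) (ins (some a, μ)).1) = Nat.card (Inv τ μ.1) := by
  have hh : ∀ x, μ.1 (μ.1 x) = x := fun x => by
    rw [← Perm.mul_apply, μ.2.2, Perm.one_apply]
  apply Nat.card_congr
  have key : ∀ f : Inv (extPair τ) (ins (some a, μ)).1, f.1 none = f.1 (some (some a)) ∧
      f.1 (some none) = f.1 (some (some a)) ∧ f.1 (some (some (μ.1 a))) = f.1 (some (some a)) := by
    intro f
    have h1 := f.2.1 none
    rw [ins_none] at h1
    have h2 := f.2.1 (some none)
    rw [ins_some_none] at h2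
    have h3 := f.2.2 none
    rw [extPair_none] at h3
    simp_all
  exact
    { toFun := fun f => ⟨fun x => f.1 (some (some x)), by
        constructor
        · intro x
          have h := f.2.1 (some (some x))
          rw [ins_some_apply] at h
          obtain ⟨k1, k2, k3⟩ := key f
          by_cases h1 : x = a
          · subst h1; exact k3
          · by_cases h2 : x = μ.1 a
            · subst h2
              change f.1 (some (some (μ.1 (μ.1 a)))) = f.1 (some (some (μ.1 a)))
              rw [hh, k3]
            · simpa [h1, h2] using h
        · exact fun x => f.2.2 (some (some x))⟩
      invFun := fun g => ⟨fun x => match x with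
        | none => g.1 a
        | some none => g.1 a
        | some (some x) => g.1 x, by
          constructor
          · rintro (_ | _ | x)
            · rw [ins_none]
            · rw [ins_some_none]
              exact g.2.1 a
            · rw [ins_some_apply]
              by_cases h1 : x = a
              · subst h1; simp
              · by_cases h2 : x = μ.1 a
                · subst h2
                  simp only [h1, if_false, if_true]
                  exact (g.2.1 a).symm
                · simp only [h1, h2, if_false]
                  exact g.2.1 x
          · rintro (_ | _ | x)
            · rfl
            · rfl
            · exact g.2.2 x⟩
      left_inv := fun f => by
        obtain ⟨k1, k2, k3⟩ := key f
        apply Subtype.ext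
        funext x
        rcases x with (_ | _ | x)
        · exact k1.symm
        · exact k2.symm
        · rfl
      right_inv := fun g => rfl }

theorem P_step {X : Type} [Fintype X] (τ : Perm X) (k : ℕ) :
    P (Option (Option X)) (extPair τ) (k + 1) = P X τ k + Fintype.card X * P X τ (k + 1) := by
  have e1 : {p : Option X × Mat X // Nat.card (Inv (extPair τ) (ins p).1) = 2 ^ (k + 1)} ≃
      {ν : Mat (Option (Option X)) // Nat.card (Inv (extPair τ) ν.1) = 2 ^ (k + 1)} :=
    Equiv.subtypeEquiv (Equiv.ofBijective _ ins_bij) (fun p => Iff.rfl)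
  unfold P
  rw [← Nat.card_congr e1, Nat.card_congr (Equiv.subtypeProdEquivSigmaSubtype
    (fun (z : Option X) (μ : Mat X) => Nat.card (Inv (extPair τ) (ins (z, μ)).1) = 2 ^ (k + 1))),
    Nat.card_sigma, Fintype.sum_option]
  simp only [inv_ins_none, inv_ins_some, pow_succ, mul_comm 2]
  simp

end

theorem P_zero {X : Type} [Nonempty X] [Finite X] (τ : Perm X) : P X τ 0 = 0 := by
  unfold P
  rw [Nat.card_eq_zero]
  left
  constructor
  rintro ⟨μ, h⟩
  rw [pow_zero, Nat.card_eq_one_iff_unique] at h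
  have := h.1
  have h2 := Subsingleton.elim (α := Inv τ μ.1) ⟨fun _ => true, by simp, by simp⟩
    ⟨fun _ => false, by simp, by simp⟩
  have h3 := congrFun (congrArg Subtype.val h2) (Classical.arbitrary X)
  simp at h3

theorem P_empty {X : Type} [IsEmpty X] (τ : Perm X) (k : ℕ) :
    P X τ k = if k = 0 then 1 else 0 := by
  have hI : ∀ μ : Mat X, Nat.card (Inv τ μ.1) = 1 := by
    intro μ
    rw [Nat.card_eq_one_iff_unique]
    refine ⟨⟨fun a b => Subtype.ext (funext fun x => isEmptyElim x)⟩,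
      ⟨⟨fun x => isEmptyElim x, fun x => isEmptyElim x, fun x => isEmptyElim x⟩⟩⟩
  unfold P
  split_ifs with h
  · rw [Nat.card_eq_one_iff_unique]
    refine ⟨⟨fun a b => Subtype.ext (Subtype.ext (Equiv.ext fun x => isEmptyElim x))⟩,
      ⟨⟨⟨1, fun x => isEmptyElim x, by simp⟩, by rw [h, pow_zero]; exact hI _⟩⟩⟩
  · rw [Nat.card_eq_zero]
    left
    constructor
    rintro ⟨μ, h2⟩
    rw [hI] at h2
    have : 1 < 2 ^ k := Nat.one_lt_two_pow h
    omega

/-- The relabelling of the endpoints. -/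
def relabel (n : ℕ) : Fin (2 * (n + 1)) ≃ Option (Option (Fin (2 * n))) where
  toFun x := if h : x.1 < 2 * n then some (some ⟨x.1, h⟩) else
    if x.1 = 2 * n then some none else none
  invFun y := match y with
    | none => ⟨2 * n + 1, by omega⟩
    | some none => ⟨2 * n, by omega⟩
    | some (some x) => ⟨x.1, by omega⟩
  left_inv x := by
    have := x.2
    by_cases h : x.1 < 2 * n
    · simp [h]
    · by_cases h2 : x.1 = 2 * n
      · simp [h2, Fin.ext_iff]
      · simp only [h, h2, dif_neg, not_false_iff, if_false]
        ext
        simp only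
        omega
  right_inv y := by
    rcases y with (_ | _ | x)
    · simp
    · simp
    · simp

theorem relabel_conj (n : ℕ) :
    (relabel n).symm.permCongr (extPair (intervalPerm n)) = intervalPerm (n + 1) := by
  have key : ∀ y, (relabel n).symm (extPair (intervalPerm n) y) =
      intervalPerm (n + 1) ((relabel n).symm y) := by
    rintro (_ | _ | x)
    · apply Fin.ext
      change 2 * n = if (2 * n + 1) % 2 = 0 then 2 * n + 1 + 1 else 2 * n + 1 - 1
      split_ifs <;> omega
    · apply Fin.ext
      change 2 * n + 1 = if (2 * n) % 2 = 0 then 2 * n + 1 else 2 * n - 1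
      split_ifs <;> omega
    · rfl
  ext1 x
  rw [permCongr_apply, key]
  simp

theorem count_step (n k : ℕ) : cyclationCount (n + 1) (k + 1) =
    cyclationCount n k + 2 * n * cyclationCount n (k + 1) := by
  rw [count_eq, count_eq, count_eq, ← relabel_conj, P_congr, P_step]
  simp

theorem count_succ_zero (n : ℕ) : cyclationCount (n + 1) 0 = 0 := by
  rw [count_eq]
  have : Nonempty (Fin (2 * (n + 1))) := ⟨⟨0, by omega⟩⟩
  exact P_zero _

theorem count_zero (k : ℕ) : cyclationCount 0 k = if k = 0 then 1 else 0 := by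
  rw [count_eq]
  have : IsEmpty (Fin (2 * 0)) := by simpa using Fin.isEmpty
  exact P_empty _ _

/-- Weight of a cycle structure. -/
def wt {N : ℕ} (i : Fin N → ℕ) : ℚ :=
  ∏ l : Fin N, ((2 * ((l : ℕ) + 1) : ℚ) ^ i l * Nat.factorial (i l))

/-- Cycle structures. -/
def St (N n k : ℕ) : Finset (Fin N → ℕ) :=
  (Fintype.piFinset fun _ => Finset.range (N + 1)).filter fun i =>
    (∑ l : Fin N, ((l : ℕ) + 1) * i l = n) ∧ (∑ l : Fin N, i l = k)

theorem le_of_sum {N n : ℕ} {i : Fin N → ℕ} (h : ∑ l : Fin N, ((l : ℕ) + 1) * i l = n)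
    (l : Fin N) : ((l : ℕ) + 1) * i l ≤ n := by
  rw [← h]
  exact Finset.single_le_sum (f := fun l : Fin N => ((l : ℕ) + 1) * i l)
    (fun _ _ => Nat.zero_le _) (Finset.mem_univ l)

theorem mem_St {N n k : ℕ} (hn : n ≤ N) (i : Fin N → ℕ) : i ∈ St N n k ↔
    (∑ l : Fin N, ((l : ℕ) + 1) * i l = n) ∧ (∑ l : Fin N, i l = k) := by
  simp only [St, Finset.mem_filter, Fintype.mem_piFinset, Finset.mem_range, and_iff_right_iff_imp]
  intro h l
  have := le_of_sum h.1 l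
  nlinarith

/-- Weighted count. -/
def A (N n k : ℕ) : ℚ := ∑ i ∈ St N n k, (wt i)⁻¹

theorem wt_ne {N : ℕ} (i : Fin N → ℕ) : wt i ≠ 0 := by
  unfold wt
  positivity

theorem wt_update {N : ℕ} (j : Fin N → ℕ) (l : Fin N) :
    wt (Function.update j l (j l + 1)) = wt j * (2 * ((l : ℕ) + 1) * (j l + 1)) := by
  unfold wt
  rw [← Finset.mul_prod_erase Finset.univ _ (Finset.mem_univ l),
    ← Finset.mul_prod_erase Finset.univ (fun l : Fin N =>
      ((2 * ((l : ℕ) + 1) : ℚ) ^ j l * Nat.factorial (j l))) (Finset.mem_univ l)]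
  rw [Finset.prod_congr rfl (g := fun l : Fin N =>
      ((2 * ((l : ℕ) + 1) : ℚ) ^ j l * Nat.factorial (j l)))]
  · simp only [Function.update_self, pow_succ, Nat.factorial_succ]
    push_cast
    ring
  · intro x hx
    rw [Function.update_of_ne (Finset.ne_of_mem_erase hx)]

theorem sum_update {N : ℕ} (j : Fin N → ℕ) (l : Fin N) (c : Fin N → ℕ) :
    ∑ m, c m * Function.update j l (j l + 1) m = ∑ m, c m * j m + c l := by
  rw [← Finset.add_sum_erase Finset.univ _ (Finset.mem_univ l),
    ← Finset.add_sum_erase Finset.univ (fun m => c m * j m) (Finset.mem_univ l)]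
  rw [Finset.sum_congr rfl (g := fun m => c m * j m)]
  · simp only [Function.update_self]
    ring
  · intro x hx
    rw [Function.update_of_ne (Finset.ne_of_mem_erase hx)]

theorem inner_sum {N n k : ℕ} (hn : n ≤ N) (l : Fin N) (hl : (l : ℕ) < n) :
    ∑ i ∈ St N n (k + 1), (((l : ℕ) + 1) * i l : ℚ) * (wt i)⁻¹ = A N (n - 1 - l) k / 2 := by
  unfold A
  rw [Finset.sum_div]
  symm
  have hs : ∀ j : Fin N → ℕ, ∑ m, Function.update j l (j l + 1) m = ∑ m, j m + 1 := by
    intro j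
    simpa using sum_update j l (fun _ => 1)
  apply Finset.sum_bij_ne_zero (fun j _ _ => Function.update j l (j l + 1))
  · intro j hj _
    rw [mem_St (by omega)] at hj
    rw [mem_St hn, sum_update, hs, hj.1, hj.2]
    omega
  · intro a _ _ b _ _ h
    funext x
    have := congrFun h x
    by_cases hx : x = l
    · subst hx; simpa using this
    · simpa [hx] using this
  · intro i hi hne
    have h0 : i l ≠ 0 := by
      intro h; apply hne; simp [h]
    have hu : Function.update (Function.update i l (i l - 1)) l
        ((Function.update i l (i l - 1)) l + 1) = i := by
      simp [Nat.sub_add_cancel (Nat.one_le_iff_ne_zero.2 h0)]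
    refine ⟨Function.update i l (i l - 1), ?_, ?_, hu⟩
    · rw [mem_St hn] at hi
      rw [mem_St (by omega)]
      have h1 := sum_update (Function.update i l (i l - 1)) l (fun m => (m : ℕ) + 1)
      have h2 := hs (Function.update i l (i l - 1))
      rw [hu] at h1 h2
      omega
    · exact div_ne_zero (inv_ne_zero (wt_ne _)) two_ne_zero
  · intro j _ _
    rw [wt_update]
    have := wt_ne j
    simp only [Function.update_self]
    push_cast
    have h1 : ((l : ℕ) : ℚ) + 1 ≠ 0 := by positivity
    have h2 : (j l : ℚ) + 1 ≠ 0 := by positivity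
    field_simp

theorem A_rec {N n k : ℕ} (hn : n ≤ N) :
    2 * n * A N n (k + 1) = ∑ m ∈ Finset.range n, A N m k := by
  have h1 : (n : ℚ) * A N n (k + 1) = ∑ l : Fin N, ∑ i ∈ St N n (k + 1),
      (((l : ℕ) + 1) * i l : ℚ) * (wt i)⁻¹ := by
    rw [Finset.sum_comm]
    unfold A
    rw [Finset.mul_sum]
    apply Finset.sum_congr rfl
    intro i hi
    rw [mem_St hn] at hi
    rw [← Finset.sum_mul]
    congr 1
    conv_lhs => rw [← hi.1]
    push_cast
    rfl
  have h2 : ∀ l : Fin N, ∑ i ∈ St N n (k + 1), (((l : ℕ) + 1) * i l : ℚ) * (wt i)⁻¹ =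
      (fun l : ℕ => if l < n then A N (n - 1 - l) k / 2 else 0) l := by
    intro l
    simp only
    split_ifs with h
    · exact inner_sum hn l h
    · apply Finset.sum_eq_zero
      intro i hi
      rw [mem_St hn] at hi
      have h3 := le_of_sum hi.1 l
      have : i l = 0 := by
        by_contra h0
        have : 1 ≤ i l := Nat.one_le_iff_ne_zero.2 h0
        nlinarith
      simp [this]
  rw [mul_assoc, h1, Finset.sum_congr rfl (fun l _ => h2 l),
    Fin.sum_univ_eq_sum_range (fun l : ℕ => if l < n then A N (n - 1 - l) k / 2 else 0),
    ← Finset.sum_filter]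
  have : (Finset.range N).filter (fun l => l < n) = Finset.range n := by
    ext x; simp; omega
  rw [this, ← Finset.sum_div, Finset.sum_range_reflect (fun m => A N m k)]
  ring

theorem A_zero {N : ℕ} (k : ℕ) : A N 0 k = if k = 0 then 1 else 0 := by
  have hz : ∀ i : Fin N → ℕ, ∑ l : Fin N, ((l : ℕ) + 1) * i l = 0 → i = 0 := by
    intro i h
    funext l
    have := le_of_sum h l
    simpa using this
  unfold A
  split_ifs with h
  · have : St N 0 k = {0} := by
      ext i
      rw [mem_St (Nat.zero_le _), Finset.mem_singleton]
      constructor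
      · exact fun h => hz i h.1
      · rintro rfl; simp [h]
    rw [this]
    simp [wt]
  · apply Finset.sum_eq_zero
    intro i hi
    rw [mem_St (Nat.zero_le _)] at hi
    have := hz i hi.1
    subst this
    simp at hi
    omega

theorem A_succ_zero {N n : ℕ} (hn : n + 1 ≤ N) : A N (n + 1) 0 = 0 := by
  unfold A
  apply Finset.sum_eq_zero
  intro i hi
  rw [mem_St hn] at hi
  have h : ∀ l, i l = 0 := by
    intro l
    have := Finset.sum_eq_zero_iff.1 hi.2 l (Finset.mem_univ l)
    exact this
  simp [h] at hi

theorem main {N : ℕ} (n : ℕ) : ∀ k, n ≤ N →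
    (cyclationCount n k : ℚ) = (Nat.factorial n * 2 ^ n : ℚ) * A N n k := by
  induction n with
  | zero => intro k _; rw [count_zero, A_zero]; split_ifs <;> simp
  | succ n ih =>
    intro k hn
    cases k with
    | zero => rw [count_succ_zero, A_succ_zero hn]; simp
    | succ k =>
      rw [count_step]
      push_cast
      rw [ih k (by omega), ih (k + 1) (by omega)]
      have h1 := A_rec (k := k) hn
      rw [Finset.sum_range_succ, ← A_rec (by omega : n ≤ N)] at h1
      push_cast at h1
      rw [Nat.factorial_succ, pow_succ]
      push_cast
      linear_combination (-(Nat.factorial n : ℚ) * 2 ^ n) * h1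

end CycAux

/-- For `n ≥ 1` and `1 ≤ k ≤ n`, `⟦n,k⟧` equals the sum, over all cycle structures
`(i_1, …, i_n)` with `∑ l·i_l = n` and `∑ i_l = k`, of
`n! · 2^n / ∏_{l=1}^n ((2l)^{i_l} · i_l!)`.  Here the cycle structure is encoded as
`i : Fin n → ℕ`, with `i l` the number of cycles of length `l+1`. -/
theorem cyclationCount_eq_sum_over_cycle_structures (n k : ℕ) (hn : 1 ≤ n) (hk1 : 1 ≤ k)
    (hkn : k ≤ n) :
    (cyclationCount n k : ℚ)
      = ∑ᶠ (i : Fin n → ℕ)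
          (_ : (∑ l : Fin n, ((l : ℕ) + 1) * i l = n) ∧ (∑ l : Fin n, i l = k)),
          (Nat.factorial n * 2 ^ n : ℚ)
            / ∏ l : Fin n, ((2 * ((l : ℕ) + 1) : ℚ) ^ i l * Nat.factorial (i l)) := by
  rw [CycAux.main (N := n) n k le_rfl, CycAux.A, Finset.mul_sum]
  rw [← finsum_mem_finset_eq_sum]
  apply finsum_congr
  intro i
  refine finsum_congr_Prop ?_ ?_
  · exact propext (CycAux.mem_St le_rfl i)
  · intro _
    rw [div_eq_mul_inv]
    rfl
end

section
/- For every n ≥ 0, the sum over all cycle structures (i_1,…,i_n) with ∑_{l=1}^{n} l·i_l = n of ∏_{l=1}^{n} 1/((2l)^{i_l}·i_l!) equals (2n−1)!!/(n!·2^n). -/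
/-- Weight of a cycle structure. -/
def cycW (N : ℕ) (i : Fin N → ℕ) : ℚ :=
  ∏ l : Fin N, (1 : ℚ) / ((2 * ((l : ℕ) + 1)) ^ i l * Nat.factorial (i l))

/-- Cycle structures of total size `m` (correct for `m ≤ N`). -/
def cycS (N m : ℕ) : Finset (Fin N → ℕ) :=
  (Fintype.piFinset fun _ => Finset.range (N + 1)).filter
    (fun i => ∑ l : Fin N, ((l : ℕ) + 1) * i l = m)

lemma mem_cycS {N m : ℕ} (hm : m ≤ N) (i : Fin N → ℕ) :
    i ∈ cycS N m ↔ ∑ l : Fin N, ((l : ℕ) + 1) * i l = m := by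
  unfold cycS
  simp only [Finset.mem_filter, Fintype.mem_piFinset, Finset.mem_range, and_iff_right_iff_imp]
  intro h l
  have := Finset.single_le_sum (f := fun l : Fin N => ((l : ℕ) + 1) * i l)
    (fun _ _ => Nat.zero_le _) (Finset.mem_univ l)
  nlinarith [Nat.zero_le ((l : ℕ) * i l)]

lemma cycW_add {N : ℕ} (j : Fin N → ℕ) (l : Fin N) :
    ((l : ℕ) + 1 : ℚ) * ((j + Pi.single l 1 : Fin N → ℕ) l : ℕ) * cycW N (j + Pi.single l 1)
      = 1 / 2 * cycW N j := by
  unfold cycW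
  rw [← Finset.mul_prod_erase _ _ (Finset.mem_univ l),
    ← Finset.mul_prod_erase (Finset.univ) (fun l : Fin N =>
      (1 : ℚ) / ((2 * ((l : ℕ) + 1)) ^ j l * Nat.factorial (j l))) (Finset.mem_univ l)]
  have h : ∏ x ∈ Finset.univ.erase l, (1 : ℚ) / ((2 * ((x : ℕ) + 1)) ^
        (j + Pi.single l 1 : Fin N → ℕ) x * Nat.factorial ((j + Pi.single l 1 : Fin N → ℕ) x))
      = ∏ x ∈ Finset.univ.erase l, (1 : ℚ) / ((2 * ((x : ℕ) + 1)) ^ j x * Nat.factorial (j x)) := by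
    apply Finset.prod_congr rfl
    intro x hx
    simp [Pi.single_eq_of_ne (Finset.ne_of_mem_erase hx)]
  rw [h, ← mul_assoc, ← mul_assoc]
  congr 1
  have h1 : (Nat.factorial (j l) : ℚ) ≠ 0 := by positivity
  have h2 : ((l : ℕ) + 1 : ℚ) ≠ 0 := by positivity
  have h3 : ((j l : ℕ) + 1 : ℚ) ≠ 0 := by positivity
  simp only [Pi.add_apply, Pi.single_eq_same, pow_succ, Nat.factorial_succ]
  push_cast
  field_simp

lemma sum_add_single {N : ℕ} (j : Fin N → ℕ) (l : Fin N) :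
    ∑ x : Fin N, ((x : ℕ) + 1) * (j + Pi.single l 1 : Fin N → ℕ) x
      = ∑ x : Fin N, ((x : ℕ) + 1) * j x + (l + 1) := by
  simp [mul_add, Finset.sum_add_distrib, Pi.single_apply]

lemma cyc_term {N m : ℕ} (hm : m ≤ N) (l : Fin N) :
    ∑ i ∈ cycS N m, ((l : ℕ) + 1 : ℚ) * (i l : ℕ) * cycW N i
      = if (l : ℕ) < m then 1 / 2 * ∑ i ∈ cycS N (m - 1 - l), cycW N i else 0 := by
  split_ifs with hl
  · rw [Finset.mul_sum]
    symm
    apply Finset.sum_of_injOn (fun j => j + Pi.single l 1)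
    · intro a _ b _ h
      exact add_right_cancel h
    · intro j hj
      simp only [Finset.mem_coe] at hj ⊢
      rw [mem_cycS (by omega)] at hj
      rw [mem_cycS hm, sum_add_single, hj]
      omega
    · intro i hi hni
      have : i l = 0 := by
        by_contra h0
        apply hni
        have he : (i - Pi.single l 1) + Pi.single l 1 = i := by
          funext x
          by_cases hx : x = l
          · subst hx
            simp
            omega
          · simp [Pi.single_eq_of_ne hx]
        refine ⟨i - Pi.single l 1, ?_, he⟩
        rw [mem_cycS hm, ← he, sum_add_single] at hi
        simp only [Finset.mem_coe]
        rw [mem_cycS (by omega)]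
        omega
      simp [this]
    · intro j _
      exact (cycW_add j l).symm
  · apply Finset.sum_eq_zero
    intro i hi
    rw [mem_cycS hm] at hi
    have := Finset.single_le_sum (f := fun l : Fin N => ((l : ℕ) + 1) * i l)
      (fun _ _ => Nat.zero_le _) (Finset.mem_univ l)
    have h0 : i l = 0 := by
      by_contra h0
      have : 1 ≤ i l := Nat.one_le_iff_ne_zero.mpr h0
      nlinarith
    simp [h0]

lemma cyc_rec {N m : ℕ} (hm : m ≤ N) :
    (m : ℚ) * ∑ i ∈ cycS N m, cycW N i
      = 1 / 2 * ∑ k ∈ Finset.range m, ∑ i ∈ cycS N k, cycW N i := by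
  have h1 : (m : ℚ) * ∑ i ∈ cycS N m, cycW N i
      = ∑ l : Fin N, ∑ i ∈ cycS N m, ((l : ℕ) + 1 : ℚ) * (i l : ℕ) * cycW N i := by
    rw [Finset.sum_comm, Finset.mul_sum]
    apply Finset.sum_congr rfl
    intro i hi
    rw [mem_cycS hm] at hi
    rw [← Finset.sum_mul, ← hi]
    push_cast
    rfl
  rw [h1, Finset.sum_congr rfl (fun l _ => cyc_term hm l),
    Fin.sum_univ_eq_sum_range (fun l => if l < m then
      1 / 2 * ∑ i ∈ cycS N (m - 1 - l), cycW N i else 0) N,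
    ← Finset.sum_filter]
  have : (Finset.range N).filter (· < m) = Finset.range m := by
    ext x
    simp
    omega
  rw [this, ← Finset.mul_sum, Finset.sum_range_reflect (fun k => ∑ i ∈ cycS N k, cycW N i) m]

/-- The target value. -/
def dfV (m : ℕ) : ℚ := (Nat.doubleFactorial (2 * m - 1) : ℚ) / (Nat.factorial m * 2 ^ m)

lemma dfV_succ (m : ℕ) : ((m : ℚ) + 1) * dfV (m + 1) = (m + 1 / 2) * dfV m := by
  have h : Nat.doubleFactorial (2 * (m + 1) - 1) = (2 * m + 1) * Nat.doubleFactorial (2 * m - 1) := by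
    cases m with
    | zero => rfl
    | succ k => exact Nat.doubleFactorial_add_two (2 * k + 1)
  unfold dfV
  rw [h, Nat.factorial_succ, pow_succ]
  push_cast
  have : (Nat.factorial m : ℚ) ≠ 0 := by positivity
  have : (m + 1 : ℚ) ≠ 0 := by positivity
  field_simp

lemma dfV_sum (m : ℕ) : (m : ℚ) * dfV m = 1 / 2 * ∑ k ∈ Finset.range m, dfV k := by
  induction m with
  | zero => simp
  | succ m ih =>
    rw [Finset.sum_range_succ, mul_add, ← ih]
    push_cast
    rw [dfV_succ]
    ring

lemma cyc_eq {N : ℕ} (m : ℕ) (hm : m ≤ N) : ∑ i ∈ cycS N m, cycW N i = dfV m := by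
  induction m using Nat.strong_induction_on with
  | _ m ih =>
    rcases Nat.eq_zero_or_pos m with rfl | hpos
    · have : cycS N 0 = {0} := by
        ext i
        rw [mem_cycS hm]
        simp [funext_iff]
      simp [this, cycW, dfV]
    · have h := cyc_rec hm
      rw [Finset.sum_congr rfl (fun k hk => ih k (Finset.mem_range.mp hk)
        ((Finset.mem_range.mp hk).le.trans hm)), ← dfV_sum] at h
      exact mul_left_cancel₀ (by positivity) h

/-- For every `n ≥ 0`, the sum over all cycle structures `(i_1, …, i_n)` with
`∑_{l=1}^n l·i_l = n` of `∏_{l=1}^n 1/((2l)^{i_l} · i_l!)` equals `(2n−1)!!/(n!·2^n)`.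
Here a cycle structure is encoded as `i : Fin n → ℕ`, with `i l` playing the role of
`i_{l+1}`. -/
theorem sum_cycle_structures_eq_doubleFactorial (n : ℕ) :
    (∑ᶠ (i : Fin n → ℕ) (_ : ∑ l : Fin n, ((l : ℕ) + 1) * i l = n),
        ∏ l : Fin n, (1 : ℚ) / ((2 * ((l : ℕ) + 1)) ^ i l * Nat.factorial (i l)))
      = (Nat.doubleFactorial (2 * n - 1) : ℚ) / (Nat.factorial n * 2 ^ n) := by
  have h := cyc_eq (N := n) n le_rfl
  rw [← finsum_mem_coe_finset] at h
  simp only [Finset.mem_coe, mem_cycS le_rfl] at h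
  exact h
end

section
/- The expected number of cycles of a random n-cyclation equals (1/2)·log n + log 2 + γ/2 + O(1/n) as n → ∞, where γ is Euler's constant; i.e. there exist constants C and N such that for all n ≥ N the absolute difference between the expected number of cycles and (1/2)·log n + log 2 + γ/2 is at most C/n. -/
/-- The expected number of cycles of a uniformly random `n`-cyclation: the average of the
number of cycles over all `n`-cyclations. -/
noncomputable def avgNumCycles (n : ℕ) : ℝ :=
  (∑ c : Cyclation n, (cycNumCycles c : ℝ)) / Fintype.card (Cyclation n)

/-- Perfect matchings on a type. -/
abbrev PM (α : Type) : Type := {μ : Equiv.Perm α // (∀ x, μ x ≠ x) ∧ μ * μ = 1}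

/-- The generating relation of components. -/
def stepRel {α : Type} (i μ : α → α) (x y : α) : Prop := y = μ x ∨ y = i x

/-- Number of components. -/
noncomputable def ncomp {α : Type} (i μ : α → α) : ℕ := Nat.card (Quot (stepRel i μ))

theorem quot_mu {α : Type} (i μ : α → α) (x : α) :
    Quot.mk (stepRel i μ) (μ x) = Quot.mk (stepRel i μ) x := 
  (Quot.sound (r := stepRel i μ) (Or.inl rfl)).symm

theorem quot_i {α : Type} (i μ : α → α) (x : α) :
    Quot.mk (stepRel i μ) (i x) = Quot.mk (stepRel i μ) x := 
  (Quot.sound (r := stepRel i μ) (Or.inr rfl)).symm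

/-- The extended interval involution. -/
def extI {α : Type} (i : α → α) : α ⊕ Bool → α ⊕ Bool := Sum.map i not

/-- insertion position -/
def posE {α : Type} : Option α → α ⊕ Bool
  | none => Sum.inr false
  | some x => Sum.inl x

theorem posE_ne {α : Type} (o : Option α) : posE o ≠ Sum.inr true := by
  cases o <;> simp [posE]

theorem posE_inj {α : Type} : Function.Injective (posE (α := α)) := by
  intro a b h; cases a <;> cases b <;> simp_all [posE]

/-- Base permutation. -/
def baseP {α : Type} (ν : Equiv.Perm α) : Equiv.Perm (α ⊕ Bool) :=
  Equiv.Perm.sumCongr ν (Equiv.swap false true)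

/-- Extended permutation. -/
def extP {α : Type} [DecidableEq α] (ν : Equiv.Perm α) (o : Option α) : Equiv.Perm (α ⊕ Bool) :=
  Equiv.swap (Sum.inr false) (posE o) * baseP ν * Equiv.swap (Sum.inr false) (posE o)

theorem baseP_sq {α : Type} (ν : Equiv.Perm α) (h : ν * ν = 1) : baseP ν * baseP ν = 1 := by
  unfold baseP
  rw [Equiv.Perm.sumCongr_mul, h, Equiv.swap_mul_self, Equiv.Perm.sumCongr_one]

theorem baseP_ne {α : Type} (ν : Equiv.Perm α) (h : ∀ x, ν x ≠ x) (x) : baseP ν x ≠ x := by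
  rcases x with x | (_ | _) <;> simp [baseP, h]

theorem conj_sq {β : Type} [DecidableEq β] (p : Equiv.Perm β) (a b : β) (h : p * p = 1) :
    (Equiv.swap a b * p * Equiv.swap a b) * (Equiv.swap a b * p * Equiv.swap a b) = 1 := by
  have hs := Equiv.swap_mul_self a b
  calc _ = Equiv.swap a b * p * (Equiv.swap a b * Equiv.swap a b) * p * Equiv.swap a b := by group
    _ = Equiv.swap a b * (p * p) * Equiv.swap a b := by rw [hs]; group
    _ = 1 := by rw [h, mul_one, hs]

theorem conj_ne {β : Type} [DecidableEq β] (p : Equiv.Perm β) (a b : β) (h : ∀ x, p x ≠ x) (x) :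
    (Equiv.swap a b * p * Equiv.swap a b) x ≠ x := by
  intro hx
  apply h (Equiv.swap a b x)
  have := congrArg (Equiv.swap a b) hx
  simpa using this

/-- The insertion map. -/
def ext {α : Type} [DecidableEq α] (p : PM α × Option α) : PM (α ⊕ Bool) :=
  ⟨extP p.1.1 p.2, conj_ne _ _ _ (baseP_ne _ p.1.2.1), conj_sq _ _ _ (baseP_sq _ p.1.2.2)⟩

theorem extP_b {α : Type} [DecidableEq α] (ν : Equiv.Perm α) (o : Option α) :
    extP ν o (Sum.inr true) = posE o := by
  have h1 : Equiv.swap (Sum.inr false) (posE o) (Sum.inr true) = Sum.inr true :=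
    Equiv.swap_apply_of_ne_of_ne (by simp) (posE_ne o).symm
  simp [extP, h1, baseP]

theorem ext_bij {α : Type} [Finite α] [DecidableEq α] : Function.Bijective (ext (α := α)) := by
  constructor
  · rintro ⟨⟨ν, h⟩, o⟩ ⟨⟨ν', h'⟩, o'⟩ he
    have he' : extP ν o = extP ν' o' := congrArg Subtype.val he
    have ho : o = o' := posE_inj (by rw [← extP_b ν o, he', extP_b])
    subst ho
    have h2 : baseP ν = baseP ν' := by
      unfold extP at he'
      exact mul_left_cancel (mul_right_cancel he')
    have h3 : ν = ν' := by
      ext x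
      have := congrArg (fun p : Equiv.Perm (α ⊕ Bool) => p (Sum.inl x)) h2
      simpa [baseP] using this
    subst h3
    rfl
  · rintro ⟨μ, h1, h2⟩
    obtain ⟨o, ho⟩ : ∃ o, posE o = μ (Sum.inr true) := by
      rcases h : μ (Sum.inr true) with x | (_ | _)
      · exact ⟨some x, rfl⟩
      · exact ⟨none, rfl⟩
      · exact absurd h (h1 _)
    set s := Equiv.swap (Sum.inr false) (posE o) with hs
    set π := s * μ * s with hπ
    have hπ1 := conj_ne μ (Sum.inr false) (posE o) h1
    have hπ2 := conj_sq μ (Sum.inr false) (posE o) h2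
    rw [← hs, ← hπ] at hπ1 hπ2
    have hss : s * s = 1 := Equiv.swap_mul_self _ _
    have hb : π (Sum.inr true) = Sum.inr false := by
      have h1 : s (Sum.inr true) = Sum.inr true :=
        Equiv.swap_apply_of_ne_of_ne (by simp) (posE_ne o).symm
      simp only [hπ, Equiv.Perm.mul_apply, h1, ← ho]
      simp [hs]
    have hπ2' : ∀ x, π (π x) = x := fun x => by
      rw [← Equiv.Perm.mul_apply, hπ2]; rfl
    have ha : π (Sum.inr false) = Sum.inr true := by
      rw [← hb, hπ2']
    have hmem : π ∈ (Equiv.Perm.sumCongrHom α Bool).range := by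
      apply Equiv.Perm.mem_sumCongrHom_range_of_perm_mapsTo_inl
      rintro _ ⟨x, rfl⟩
      rcases h : π (Sum.inl x) with y | (_ | _)
      · exact ⟨y, rfl⟩
      · have := hπ2' (Sum.inl x)
        rw [h, ha] at this; simp at this
      · have := hπ2' (Sum.inl x)
        rw [h, hb] at this; simp at this
    obtain ⟨⟨ν, τ⟩, hντ⟩ := hmem
    have hντ' : Equiv.Perm.sumCongr ν τ = π := hντ
    have hτ : τ = Equiv.swap false true := by
      ext b
      have := congrArg (fun p : Equiv.Perm (α ⊕ Bool) => p (Sum.inr b)) hντ'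
      cases b
      · simp [ha] at this; simp [this]
      · simp [hb] at this; simp [this]
    subst hτ
    have hν : ∀ x, π (Sum.inl x) = Sum.inl (ν x) := fun x => by rw [← hντ']; simp
    refine ⟨(⟨ν, ?_, ?_⟩, o), ?_⟩
    · intro x hx
      exact hπ1 (Sum.inl x) (by rw [hν, hx])
    · ext x
      have := hπ2' (Sum.inl x)
      rw [hν, hν] at this
      simpa using this
    · apply Subtype.ext
      change s * Equiv.Perm.sumCongr ν _ * s = μ
      rw [hντ', hπ]
      calc s * (s * μ * s) * s = (s * s) * μ * (s * s) := by group
        _ = μ := by rw [hss]; group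

theorem ncomp_none {α : Type} [Finite α] [DecidableEq α] (i : α → α) (ν : Equiv.Perm α) :
    ncomp (extI i) (extP ν none) = ncomp i ν + 1 := by
  have hl : ∀ z, extP ν none (Sum.inl z) = Sum.inl (ν z) := by
    intro z; simp [extP, posE, baseP]
  have hr : ∀ z, extP ν none (Sum.inr z) = Sum.inr (!z) := by
    intro z; cases z <;> simp [extP, posE, baseP]
  unfold ncomp
  rw [← Finite.card_option]
  let F : α ⊕ Bool → Option (Quot (stepRel i ν)) := Sum.elim (fun z => some (Quot.mk _ z)) (fun _ => none)
  refine Nat.card_congr ⟨Quot.lift F ?_, fun o => o.elim (Quot.mk _ (Sum.inr false))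
    (Quot.lift (fun z => Quot.mk _ (Sum.inl z)) ?_), ?_, ?_⟩
  · rintro (x | x) y (rfl | rfl)
    · simp [F, hl, quot_mu]
    · simp [F, extI, quot_i]
    · simp [F, hr]
    · simp [F, extI]
  · rintro x y (rfl | rfl)
    · rw [← hl, quot_mu]
    · exact (quot_i (extI i) (extP ν none) (Sum.inl x)).symm
  · rintro ⟨x | (_ | _)⟩
    · rfl
    · rfl
    · exact (quot_i (extI i) (extP ν none) (Sum.inr true))
  · rintro (_ | x)
    · rfl
    · induction x using Quot.ind with
      | mk x => rfl

theorem ncomp_some {α : Type} [Finite α] [DecidableEq α] (i : α → α) (ν : Equiv.Perm α)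
    (h1 : ∀ x, ν x ≠ x) (h2 : ν * ν = 1) (x : α) :
    ncomp (extI i) (extP ν (some x)) = ncomp i ν := by
  have h2' : ∀ x, ν (ν x) = x := fun x => by
    rw [← Equiv.Perm.mul_apply, h2]; rfl
  have hb : extP ν (some x) (Sum.inr true) = Sum.inl x := extP_b _ _
  have ha : extP ν (some x) (Sum.inr false) = Sum.inl (ν x) := by
    have : Equiv.swap (Sum.inr false : α ⊕ Bool) (Sum.inl x) (Sum.inl (ν x)) = Sum.inl (ν x) :=
      Equiv.swap_apply_of_ne_of_ne (by simp) (by simp [h1])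
    simp [extP, posE, baseP, this]
  have hx : extP ν (some x) (Sum.inl x) = Sum.inr true := by
    have : Equiv.swap (Sum.inr false : α ⊕ Bool) (Sum.inl x) (Sum.inr true) = Sum.inr true :=
      Equiv.swap_apply_of_ne_of_ne (by simp) (by simp)
    simp [extP, posE, baseP, this]
  have hy : extP ν (some x) (Sum.inl (ν x)) = Sum.inr false := by
    have : Equiv.swap (Sum.inr false : α ⊕ Bool) (Sum.inl x) (Sum.inl (ν x)) = Sum.inl (ν x) :=
      Equiv.swap_apply_of_ne_of_ne (by simp) (by simp [h1])
    simp [extP, posE, baseP, this, h2']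
  have hz : ∀ z, z ≠ x → z ≠ ν x → extP ν (some x) (Sum.inl z) = Sum.inl (ν z) := by
    intro z hz1 hz2
    have hz3 : ν z ≠ x := fun h => hz2 (by rw [← h, h2'])
    have e1 : Equiv.swap (Sum.inr false : α ⊕ Bool) (Sum.inl x) (Sum.inl z) = Sum.inl z :=
      Equiv.swap_apply_of_ne_of_ne (by simp) (by simp [hz1])
    have e2 : Equiv.swap (Sum.inr false : α ⊕ Bool) (Sum.inl x) (Sum.inl (ν z)) = Sum.inl (ν z) :=
      Equiv.swap_apply_of_ne_of_ne (by simp) (by simp [hz3])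
    simp [extP, posE, baseP, e1, e2]
  have qab : Quot.mk (stepRel (extI i) (extP ν (some x))) (Sum.inr true) =
      Quot.mk (stepRel (extI i) (extP ν (some x))) (Sum.inr false) :=
    quot_i (extI i) (extP ν (some x)) (Sum.inr false)
  have qx := quot_mu (extI i) (extP ν (some x)) (Sum.inl x)
  have qy := quot_mu (extI i) (extP ν (some x)) (Sum.inl (ν x))
  rw [hx] at qx
  rw [hy] at qy
  unfold ncomp
  let F : α ⊕ Bool → Quot (stepRel i ν) := Sum.elim (fun z => Quot.mk _ z) (fun _ => Quot.mk _ x)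
  refine Nat.card_congr ⟨Quot.lift F ?_, 
    Quot.lift (fun z => Quot.mk _ (Sum.inl z)) ?_, ?_, ?_⟩
  · rintro (z | (_ | _)) y (rfl | rfl)
    · by_cases hz1 : z = x
      · subst hz1; simp [F, hx]
      by_cases hz2 : z = ν x
      · subst hz2; simp [F, hy, quot_mu]
      simp [F, hz z hz1 hz2, quot_mu]
    · simp [F, extI, quot_i]
    · simp [F, ha, quot_mu]
    · simp [F, extI]
    · simp [F, hb]
    · simp [F, extI]
  · rintro z y (rfl | rfl)
    · by_cases hz1 : z = x
      · subst hz1; rw [← qx, ← qy, qab]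
      by_cases hz2 : z = ν x
      · subst hz2; rw [h2', ← qx, ← qy, qab]
      rw [← hz z hz1 hz2, quot_mu]
    · exact (quot_i (extI i) (extP ν (some x)) (Sum.inl z)).symm
  · rintro ⟨z | (_ | _)⟩
    · rfl
    · exact qx.symm.trans qab
    · exact qx.symm
  · rintro ⟨x⟩; rfl

theorem sum_step {α : Type} [Fintype α] [DecidableEq α] [Fintype (PM α)]
    [Fintype (PM (α ⊕ Bool))] (i : α → α) :
    ∑ μ : PM (α ⊕ Bool), (ncomp (extI i) μ.1 : ℝ) =
      (Fintype.card α + 1) * ∑ μ : PM α, (ncomp i μ.1 : ℝ) + Fintype.card (PM α) := by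
  rw [← Function.Bijective.sum_comp ext_bij, Fintype.sum_prod_type, Finset.mul_sum]
  have : (Fintype.card (PM α) : ℝ) = ∑ μ : PM α, 1 := by simp
  rw [this, ← Finset.sum_add_distrib]
  refine Finset.sum_congr rfl fun ν _ => ?_
  rw [Fintype.sum_option]
  have e1 : ncomp (extI i) (ext (ν, none)).1 = ncomp i ν.1 + 1 := ncomp_none i ν.1
  have e2 : ∀ x, ncomp (extI i) (ext (ν, some x)).1 = ncomp i ν.1 := fun x =>
    ncomp_some i ν.1 ν.2.1 ν.2.2 x
  simp only [e1, e2]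
  simp
  ring

theorem card_step {α : Type} [Fintype α] [DecidableEq α] [Fintype (PM α)]
    [Fintype (PM (α ⊕ Bool))] :
    Fintype.card (PM (α ⊕ Bool)) = Fintype.card (PM α) * (Fintype.card α + 1) := by
  rw [← Fintype.card_of_bijective ext_bij, Fintype.card_prod, Fintype.card_option]

/-- Transport of matchings. -/
def pmCongr {α β : Type} (e : α ≃ β) : PM α ≃ PM β :=
  Equiv.subtypeEquiv e.permCongr (by
    intro μ
    refine and_congr ?_ ?_
    · constructor
      · intro h x hx
        apply h (e.symm x)
        apply e.injective
        simpa using hx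
      · intro h x hx
        apply h (e x)
        simp [hx]
    · change _ ↔ e.permCongrHom μ * e.permCongrHom μ = 1
      rw [← map_mul, EmbeddingLike.map_eq_one_iff])

theorem ncomp_congr {α β : Type} (e : α ≃ β) (i : α → α) (j : β → β)
    (h : ∀ x, e (i x) = j (e x)) (μ : PM α) :
    ncomp j (pmCongr e μ).1 = ncomp i μ.1 := by
  unfold ncomp
  refine (Nat.card_congr (Quot.congr e ?_)).symm
  intro x y
  simp [stepRel, pmCongr, ← h]

theorem cyc_eq_s10 {n : ℕ} (c : Cyclation n) : cycNumCycles c = ncomp (intervalPerm n) c.1 := by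
  unfold cycNumCycles ncomp
  refine Nat.card_congr ⟨Quot.lift (fun x => Quot.mk _ x) ?_, Quot.lift (fun x => Quot.mk _ x) ?_,
    ?_, ?_⟩
  · rintro x y ⟨⟨g, hg⟩, rfl⟩
    change Quot.mk _ (g y) = Quot.mk _ y
    have hg' : g ∈ Subgroup.closure {c.1, intervalPerm n} := hg
    clear hg
    induction hg' using Subgroup.closure_induction generalizing y with
    | mem g hg' =>
      rcases hg' with rfl | rfl
      · exact quot_mu _ _ _
      · exact quot_i _ _ _
    | one => rfl
    | mul g h hg hh ihg ihh => rw [Equiv.Perm.mul_apply, ihg, ihh]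
    | inv g hg ihg =>
      have := ihg (g⁻¹ y)
      rw [← this]; simp
  · rintro x y (rfl | rfl)
    · exact (Quotient.sound (s := MulAction.orbitRel (cycGroup c) (Fin (2*n)))
        ⟨⟨c.1, Subgroup.subset_closure (by simp)⟩, rfl⟩).symm
    · exact (Quotient.sound (s := MulAction.orbitRel (cycGroup c) (Fin (2*n)))
        ⟨⟨intervalPerm n, Subgroup.subset_closure (by simp)⟩, rfl⟩).symm
  · rintro ⟨x⟩; rfl
  · rintro ⟨x⟩; rfl

/-- Splitting off the last interval. -/
noncomputable def finSplit (n : ℕ) : Fin (2 * n) ⊕ Bool ≃ Fin (2 * (n + 1)) :=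
  Equiv.ofBijective
    (Sum.elim (fun x => ⟨x.1, by omega⟩) (fun b => ⟨2 * n + b.toNat, by cases b <;> simp <;> omega⟩))
    (by
      rw [Fintype.bijective_iff_injective_and_card]
      constructor
      · rintro (x | (_ | _)) (y | (_ | _)) h <;> simp [Fin.ext_iff] at h ⊢ <;> omega
      · simp; ring)

theorem finSplit_comm (n : ℕ) (x) :
    finSplit n (extI (intervalPerm n) x) = intervalPerm (n + 1) (finSplit n x) := by
  rcases x with x | (_ | _) <;> ext <;>
    simp [finSplit, extI, intervalPerm, Function.Involutive.toPerm]

noncomputable instance pmFT (α : Type) [Finite α] : Fintype (PM α) := Fintype.ofFinite _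

/-- total -/
noncomputable def totS (n : ℕ) : ℝ := ∑ c : PM (Fin (2 * n)), (ncomp (intervalPerm n) c.1 : ℝ)

/-- count -/
noncomputable def totT (n : ℕ) : ℕ := Fintype.card (PM (Fin (2 * n)))

theorem totS_succ (n : ℕ) : totS (n + 1) = (2 * n + 1) * totS n + totT n := by
  unfold totS totT
  rw [← Equiv.sum_comp (pmCongr (finSplit n))]
  simp only [ncomp_congr (finSplit n) (extI (intervalPerm n)) (intervalPerm (n+1)) (finSplit_comm n)]
  rw [sum_step]
  simp

theorem totT_succ (n : ℕ) : totT (n + 1) = totT n * (2 * n + 1) := by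
  unfold totT
  rw [← Fintype.card_congr (pmCongr (finSplit n)), card_step]
  simp

theorem totT_zero : totT 0 = 1 := by
  unfold totT
  rw [Fintype.card_eq_one_iff]
  refine ⟨⟨1, fun x => x.elim0, rfl⟩, fun y => ?_⟩
  apply Subtype.ext
  ext x
  exact x.elim0

theorem totS_zero : totS 0 = 0 := by
  unfold totS
  apply Finset.sum_eq_zero
  intro c _
  have : IsEmpty (Quot (stepRel (intervalPerm 0) c.1)) := ⟨fun q => by
    induction q using Quot.ind with
    | mk x => exact x.elim0⟩
  simp [ncomp]

theorem totT_pos (n : ℕ) : 0 < totT n := by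
  induction n with
  | zero => simp [totT_zero]
  | succ n ih => rw [totT_succ]; positivity

theorem avg_eq (n : ℕ) : avgNumCycles n = totS n / totT n := by
  unfold avgNumCycles totS totT
  simp only [cyc_eq_s10]
  congr 1

theorem avg_harm (n : ℕ) :
    avgNumCycles n = (harmonic (2 * n) : ℝ) - (harmonic n : ℝ) / 2 := by
  rw [avg_eq]
  induction n with
  | zero => simp [totS_zero]
  | succ n ih =>
    have hT : (totT n : ℝ) ≠ 0 := by exact_mod_cast (totT_pos n).ne'
    have hn : (2 * (n:ℝ) + 1) ≠ 0 := by positivity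
    have hn' : ((n:ℝ) + 1) ≠ 0 := by positivity
    have e : totS (n + 1) / totT (n + 1) = totS n / totT n + 1 / (2 * n + 1) := by
      rw [totS_succ, totT_succ]; push_cast; field_simp
    rw [e, ih, show 2 * (n + 1) = 2 * n + 1 + 1 by ring, harmonic_succ, harmonic_succ,
      harmonic_succ]
    push_cast
    have : (2 * (n:ℝ) + 1 + 1) ≠ 0 := by positivity
    field_simp
    ring

theorem harm_bound (n : ℕ) (hn : 0 < n) :
    |(harmonic n : ℝ) - Real.log n - Real.eulerMascheroniConstant| ≤ 1 / n := by
  have h1 := Real.eulerMascheroniSeq_lt_eulerMascheroniConstant n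
  have h2 := Real.eulerMascheroniConstant_lt_eulerMascheroniSeq' n
  have hn' : (0:ℝ) < n := by exact_mod_cast hn
  unfold Real.eulerMascheroniSeq at h1
  unfold Real.eulerMascheroniSeq' at h2
  rw [if_neg hn.ne'] at h2
  have h3 : Real.log (n + 1) ≤ Real.log n + 1 / n := by
    have : (n:ℝ) + 1 = n * (1 + 1 / n) := by field_simp
    rw [this, Real.log_mul (by positivity) (by positivity)]
    have := Real.log_le_sub_one_of_pos (x := 1 + 1 / (n:ℝ)) (by positivity)
    linarith
  rw [abs_le]
  constructor <;> linarith [show (0:ℝ) < 1 / n by positivity]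

/-- The expected number of cycles of a random `n`-cyclation equals
`(1/2) log n + log 2 + γ/2 + O(1/n)` as `n → ∞`, where `γ` is Euler's constant. -/
theorem avgNumCycles_asymptotic :
    ∃ C : ℝ, ∃ N : ℕ, ∀ n : ℕ, N ≤ n →
      |avgNumCycles n
          - ((1 / 2) * Real.log n + Real.log 2 + Real.eulerMascheroniConstant / 2)|
        ≤ C / n := by
  refine ⟨1, 1, fun n hn => ?_⟩
  have hn' : (0:ℝ) < n := by exact_mod_cast hn
  have h1 := harm_bound n hn
  have h2 := harm_bound (2 * n) (by omega)
  rw [avg_harm]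
  push_cast at h2
  rw [Real.log_mul (by norm_num) hn'.ne'] at h2
  have : 1 / (2 * (n:ℝ)) = 1 / n / 2 := by field_simp
  rw [this] at h2
  rw [abs_le] at *
  constructor <;> linarith [h1.1, h1.2, h2.1, h2.2]
end

section
/- The expected length of the longest cycle of a random n-cyclation satisfies Ex[M_n] ∼ (∫_0^∞ e^{−E(x)/2 − x} dx)·n as n → ∞, i.e. Ex[M_n]/n tends to ∫_0^∞ e^{−E(x)/2 − x} dx, where E(x) = ∫_x^∞ (e^{−y}/y) dy. -/
/-- `Ex[M_n]`: the expected length of the longest cycle of a uniformly random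
`n`-cyclation, i.e. the average of the longest cycle length over all `n`-cyclations. -/
noncomputable def ExM (n : ℕ) : ℝ :=
  (∑ c : Cyclation n, (longestCycle c : ℝ)) / Fintype.card (Cyclation n)

/-- `Ex[T_n]`: the expected length of the shortest cycle of a uniformly random
`n`-cyclation, i.e. the average of the shortest cycle length over all `n`-cyclations. -/
noncomputable def ExT (n : ℕ) : ℝ :=
  (∑ c : Cyclation n, (shortestCycle c : ℝ)) / Fintype.card (Cyclation n)

/-- The exponential integral `E(x) = ∫_x^∞ e^{-y}/y dy`. -/
noncomputable def Efun (x : ℝ) : ℝ := ∫ y in Set.Ioi x, Real.exp (-y) / y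


namespace CycProof

open Equiv

/-- endpoints of `n+1` intervals -/
def eSum (n : ℕ) : Fin (2 * n) ⊕ Fin 2 ≃ Fin (2 * (n + 1)) := finSumFinEquiv

lemma interval_val (n : ℕ) (x : Fin (2 * n)) :
    (intervalPerm n x).1 = if x.1 % 2 = 0 then x.1 + 1 else x.1 - 1 := rfl

lemma eSum_inl (n : ℕ) (u : Fin (2 * n)) : (eSum n (Sum.inl u)).1 = u.1 := rfl

lemma eSum_inr (n : ℕ) (u : Fin 2) : (eSum n (Sum.inr u)).1 = 2 * n + u.1 := rfl

lemma interval_inl (n : ℕ) (u : Fin (2 * n)) :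
    intervalPerm (n + 1) (eSum n (Sum.inl u)) = eSum n (Sum.inl (intervalPerm n u)) := by
  apply Fin.ext
  rw [interval_val, eSum_inl, eSum_inl, interval_val]

lemma interval_inr0 (n : ℕ) :
    intervalPerm (n + 1) (eSum n (Sum.inr 0)) = eSum n (Sum.inr 1) := by
  apply Fin.ext
  rw [interval_val, eSum_inr, eSum_inr]
  simp

lemma interval_inr1 (n : ℕ) :
    intervalPerm (n + 1) (eSum n (Sum.inr 1)) = eSum n (Sum.inr 0) := by
  apply Fin.ext
  rw [interval_val, eSum_inr, eSum_inr]
  have : ¬ (2 * n + 1) % 2 = 0 := by omega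
  simp [this]

/-- matching on the sum type -/
def insPerm {n : ℕ} (μ : Perm (Fin (2 * n))) (z : Fin (2 * n) ⊕ Fin 2) :
    Perm (Fin (2 * n) ⊕ Fin 2) :=
  swap (Sum.inr 1) z * Perm.sumCongr μ (swap 0 1) * swap (Sum.inr 1) z

def zOf {n : ℕ} : Option (Fin (2 * n)) → Fin (2 * n) ⊕ Fin 2
  | none => Sum.inr 1
  | some x => Sum.inl x

lemma zOf_ne {n : ℕ} (o : Option (Fin (2 * n))) : zOf o ≠ Sum.inr 0 := by
  cases o <;> simp [zOf]

lemma insPerm_a {n : ℕ} (μ : Perm (Fin (2 * n))) (z) (hz : z ≠ Sum.inr 0) :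
    insPerm μ z (Sum.inr 0) = z := by
  have : swap (Sum.inr 1) z (Sum.inr 0 : Fin (2 * n) ⊕ Fin 2) = Sum.inr 0 :=
    swap_apply_of_ne_of_ne (by simp) (Ne.symm hz)
  simp [insPerm, this]

lemma conj_fpf {α : Type*} (μ τ : Perm α) (h : ∀ x, μ x ≠ x) (hτ : τ * τ = 1) (x : α) :
    (τ * μ * τ) x ≠ x := by
  intro h2
  have e : ∀ y, τ (τ y) = y := fun y => by simpa using congrArg (fun p : Perm α => p y) hτ
  apply h (τ x)
  apply τ.injective
  rw [e]
  exact h2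

lemma conj_inv {α : Type*} (μ τ : Perm α) (h : μ * μ = 1) (hτ : τ * τ = 1) :
    (τ * μ * τ) * (τ * μ * τ) = 1 := by
  calc _ = τ * μ * (τ * τ) * μ * τ := by group
    _ = τ * (μ * μ) * τ := by rw [hτ]; group
    _ = 1 := by rw [h]; simpa using hτ

lemma base_fpf {n : ℕ} (c : Cyclation n) (x) :
    Perm.sumCongr c.1 (swap (0 : Fin 2) 1) x ≠ x := by
  rcases x with x | x
  · simpa using c.2.1 x
  · fin_cases x <;> simp

lemma base_inv {n : ℕ} (c : Cyclation n) :
    Perm.sumCongr c.1 (swap (0 : Fin 2) 1) * Perm.sumCongr c.1 (swap (0 : Fin 2) 1) = 1 := by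
  rw [Perm.sumCongr_mul, c.2.2]
  simp

lemma permCongr_mul' {α β : Type*} (e : α ≃ β) (p q : Perm α) :
    e.permCongr (p * q) = e.permCongr p * e.permCongr q := by
  ext x; simp

def ins {n : ℕ} (p : Cyclation n × Option (Fin (2 * n))) : Cyclation (n + 1) :=
  ⟨(eSum n).permCongr (insPerm p.1.1 (zOf p.2)), by
    intro x hx
    have := conj_fpf _ (swap (Sum.inr 1) (zOf p.2)) (base_fpf p.1) (swap_mul_self _ _)
      ((eSum n).symm x)
    apply this
    apply (eSum n).injective
    simpa [insPerm] using hx, by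
    rw [← permCongr_mul', insPerm, conj_inv _ _ (base_inv p.1) (swap_mul_self _ _)]
    ext; simp⟩

lemma ins_injective (n : ℕ) : Function.Injective (@ins n) := by
  rintro ⟨c, o⟩ ⟨d, o'⟩ h
  have h1 : insPerm c.1 (zOf o) = insPerm d.1 (zOf o') :=
    (eSum n).permCongr.injective (congrArg Subtype.val h)
  have h2 : zOf o = zOf o' := by
    rw [← insPerm_a c.1 _ (zOf_ne o), ← insPerm_a d.1 _ (zOf_ne o'), h1]
  have h3 : o = o' := by
    cases o <;> cases o' <;> simp_all [zOf]
  subst h3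
  rw [insPerm, insPerm] at h1
  have h4 := mul_left_cancel (mul_right_cancel h1)
  have h5 : c.1 = d.1 := by
    ext x
    have := congrArg (fun p : Perm _ => p (Sum.inl x)) h4
    simp at this
    rw [this]
  rw [Subtype.ext h5]

lemma ins_surjective (n : ℕ) : Function.Surjective (@ins n) := by
  intro c'
  set ν : Perm (Fin (2 * n) ⊕ Fin 2) := (eSum n).symm.permCongr c'.1 with hν
  have hf : ∀ x, ν x ≠ x := by
    intro x hx
    apply c'.2.1 (eSum n x)
    apply (eSum n).symm.injective
    simpa [hν] using hx
  have hi : ν * ν = 1 := by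
    rw [hν, ← permCongr_mul', c'.2.2]; ext; simp
  obtain ⟨o, ho⟩ : ∃ o, zOf o = ν (Sum.inr 0) := by
    rcases hz : ν (Sum.inr 0) with x | x
    · exact ⟨some x, rfl⟩
    · fin_cases x
      · exact absurd hz (hf _)
      · exact ⟨none, rfl⟩
  set τ : Perm (Fin (2 * n) ⊕ Fin 2) := swap (Sum.inr 1) (zOf o) with hτ
  have hττ : τ * τ = 1 := swap_mul_self _ _
  set κ := τ * ν * τ with hκ
  have hκf := conj_fpf ν τ hf hττ
  have hκi := conj_inv ν τ hi hττ
  have hτ0 : τ (Sum.inr 0) = Sum.inr 0 :=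
    swap_apply_of_ne_of_ne (by simp) (Ne.symm (zOf_ne o))
  have hκ0 : κ (Sum.inr 0) = Sum.inr 1 := by
    change τ (ν (τ (Sum.inr 0))) = _
    rw [hτ0, ← ho, hτ, swap_apply_right]
  have hκ1 : κ (Sum.inr 1) = Sum.inr 0 := by
    rw [← hκ0]
    exact congrArg (fun p : Perm _ => p (Sum.inr 0)) hκi
  have hm : Set.MapsTo κ (Set.range Sum.inl) (Set.range Sum.inl) := by
    rintro _ ⟨x, rfl⟩
    rcases hz : κ (Sum.inl x) with y | y
    · exact ⟨y, rfl⟩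
    · exfalso
      fin_cases y
      · have := κ.injective (hz.trans hκ1.symm); simp at this
      · have := κ.injective (hz.trans hκ0.symm); simp at this
  obtain ⟨⟨s, t⟩, hst⟩ := Perm.mem_sumCongrHom_range_of_perm_mapsTo_inl hm
  have hst : Perm.sumCongr s t = κ := hst
  have ht : t = swap 0 1 := by
    have h0 : t 0 = 1 := by rw [← hst] at hκ0; simpa using hκ0
    have h1 : t 1 = 0 := by rw [← hst] at hκ1; simpa using hκ1
    ext x; fin_cases x <;> simp [h0, h1]
  refine ⟨(⟨s, ?_, ?_⟩, o), ?_⟩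
  · intro x hx
    apply hκf (Sum.inl x)
    change κ _ = _
    rw [← hst]; simp [hx]
  · ext x
    have := congrArg (fun p : Perm _ => p (Sum.inl x)) hκi
    change κ (κ _) = _ at this
    rw [← hst] at this
    simp at this
    simp [this]
  · apply Subtype.ext
    change (eSum n).permCongr (insPerm s (zOf o)) = c'.1
    have : insPerm s (zOf o) = ν := by
      rw [insPerm, ← ht, hst, hκ]
      calc _ = (τ * τ) * ν * (τ * τ) := by simp only [← hτ]; group
        _ = ν := by rw [hττ]; simp
    rw [this, hν]
    ext; simp

lemma sum_ins {n : ℕ} {A : Type*} [AddCommMonoid A] (F : Cyclation (n + 1) → A) :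
    ∑ c', F c' = ∑ c : Cyclation n, (F (ins (c, none)) + ∑ x, F (ins (c, some x))) := by
  rw [← (Equiv.ofBijective _ ⟨ins_injective n, ins_surjective n⟩).sum_comp,
    Fintype.sum_prod_type]
  simp only [Fintype.sum_option]
  rfl


open MvPolynomial

/-- equivalence generated by the two involutions -/
def Rel {n : ℕ} (c : Cyclation n) (x y : Fin (2 * n)) : Prop :=
  y ∈ MulAction.orbit (cycGroup c) x

lemma Rel.refl {n : ℕ} (c : Cyclation n) (x) : Rel c x x := MulAction.mem_orbit_self x

lemma Rel.symm {n : ℕ} {c : Cyclation n} {x y} (h : Rel c x y) : Rel c y x :=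
  MulAction.mem_orbit_symm.1 h

lemma Rel.trans {n : ℕ} {c : Cyclation n} {x y z} (h : Rel c x y) (h' : Rel c y z) :
    Rel c x z := by
  unfold Rel at *
  rw [← MulAction.orbit_eq_iff] at *
  rw [h', h]

lemma Rel.mu {n : ℕ} (c : Cyclation n) (x) : Rel c x (c.1 x) :=
  ⟨⟨c.1, Subgroup.subset_closure (by simp)⟩, rfl⟩

lemma Rel.sigma {n : ℕ} (c : Cyclation n) (x) : Rel c x (intervalPerm n x) :=
  ⟨⟨intervalPerm n, Subgroup.subset_closure (by simp)⟩, rfl⟩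

lemma Rel.min {n : ℕ} (c : Cyclation n) (r : Fin (2 * n) → Fin (2 * n) → Prop)
    (hr : Equivalence r) (h1 : ∀ x, r x (c.1 x)) (h2 : ∀ x, r x (intervalPerm n x))
    {x y} (h : Rel c x y) : r x y := by
  obtain ⟨⟨g, hg⟩, rfl⟩ := h
  change r x (g x)
  revert x
  refine Subgroup.closure_induction (p := fun g _ => ∀ {x}, r x (g x)) ?_ ?_ ?_ ?_ hg
  · rintro g (rfl | rfl) x
    · exact h1 x
    · exact h2 x
  · intro x; exact hr.refl _
  · intro g g' _ _ ih ih' x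
    exact hr.trans ih' ih
  · intro g _ ih x
    have := @ih (g⁻¹ x)
    simp at this
    exact hr.symm this

structure IsComp {n : ℕ} (c : Cyclation n) {Q : Type} (f : Fin (2 * n) → Q) : Prop where
  surj : Function.Surjective f
  iff : ∀ x y, f x = f y ↔ Rel c x y

lemma IsComp.mk' {n : ℕ} (c : Cyclation n) {Q : Type} (f : Fin (2 * n) → Q)
    (hs : Function.Surjective f) (h1 : ∀ x, f (c.1 x) = f x) (h2 : ∀ x, f (intervalPerm n x) = f x)
    (h3 : ∀ x y, f x = f y → Rel c x y) : IsComp c f where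
  surj := hs
  iff x y := ⟨h3 x y, fun h => Rel.min c (fun x y => f x = f y)
    ⟨fun _ => rfl, fun h => h.symm, fun h h' => h.trans h'⟩ (fun x => (h1 x).symm)
    (fun x => (h2 x).symm) h⟩

lemma IsComp.mu {n : ℕ} {c : Cyclation n} {Q : Type} {f : Fin (2 * n) → Q} (h : IsComp c f) (x) :
    f (c.1 x) = f x := ((h.iff _ _).2 (Rel.mu c x)).symm

lemma IsComp.sigma {n : ℕ} {c : Cyclation n} {Q : Type} {f : Fin (2 * n) → Q} (h : IsComp c f) (x) :
    f (intervalPerm n x) = f x := ((h.iff _ _).2 (Rel.sigma c x)).symm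

/-- the canonical quotient -/
abbrev QQ {n : ℕ} (c : Cyclation n) : Type := MulAction.orbitRel.Quotient (cycGroup c) (Fin (2 * n))

def qmk {n : ℕ} (c : Cyclation n) (x : Fin (2 * n)) : QQ c := Quotient.mk _ x

lemma isComp_qmk {n : ℕ} (c : Cyclation n) : IsComp c (qmk c) where
  surj := Quotient.mk_surjective
  iff x y := by
    unfold qmk Rel
    rw [Quotient.eq, MulAction.orbitRel_apply, MulAction.mem_orbit_symm]

noncomputable instance {n : ℕ} (c : Cyclation n) : Fintype (QQ c) := Fintype.ofFinite _

open Classical in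
/-- size of a fibre -/
noncomputable def fsz {α Q : Type} [Fintype α] (f : α → Q) (t : Q) : ℕ :=
  (Finset.univ.filter fun x => f x = t).card

noncomputable def wt {n : ℕ} (c : Cyclation n) : MvPolynomial ℕ ℝ :=
  ∏ t : QQ c, X (fsz (qmk c) t)

lemma wt_eq {n : ℕ} {c : Cyclation n} {Q : Type} [Fintype Q] {f : Fin (2 * n) → Q}
    (h : IsComp c f) : wt c = ∏ t : Q, X (fsz f t) := by
  have hq := isComp_qmk c
  let g : QQ c → Q := Quotient.lift f (fun x y hxy => by
    rw [h.iff, ← hq.iff]; exact Quotient.sound hxy)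
  have hg : ∀ x, g (qmk c x) = f x := fun x => rfl
  have hb : Function.Bijective g := by
    constructor
    · intro s t hst
      obtain ⟨x, rfl⟩ := hq.surj s
      obtain ⟨y, rfl⟩ := hq.surj t
      rw [hg, hg] at hst
      rw [hq.iff, ← h.iff]; exact hst
    · intro t
      obtain ⟨x, rfl⟩ := h.surj t
      exact ⟨_, hg x⟩
  unfold wt
  refine Fintype.prod_bijective g hb _ _ ?_
  intro t
  congr 1
  unfold fsz
  congr 1
  ext x
  simp [← hg, hb.1.eq_iff]

lemma orbit_ncard {n : ℕ} {c : Cyclation n} {Q : Type} {f : Fin (2 * n) → Q}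
    (h : IsComp c f) (x) : (MulAction.orbit (cycGroup c) x).ncard = fsz f (f x) := by
  unfold fsz
  rw [← Set.ncard_coe_finset]
  congr 1
  ext y
  simp only [Finset.coe_filter, Finset.mem_univ, true_and, Set.mem_ofPred_eq]
  rw [eq_comm, h.iff]; rfl

noncomputable def mx {n : ℕ} (c : Cyclation n) : ℕ :=
  Finset.univ.sup fun x : Fin (2 * n) => (MulAction.orbit (cycGroup c) x).ncard

lemma longestCycle_eq {n : ℕ} (c : Cyclation n) : longestCycle c = mx c / 2 := rfl

lemma le_mx {n : ℕ} {c : Cyclation n} {Q : Type} {f : Fin (2 * n) → Q}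
    (h : IsComp c f) (x) : fsz f (f x) ≤ mx c := by
  rw [← orbit_ncard h]
  exact Finset.le_sup (f := fun x : Fin (2 * n) => (MulAction.orbit (cycGroup c) x).ncard)
    (Finset.mem_univ x)

lemma mx_le {n : ℕ} {c : Cyclation n} {Q : Type} {f : Fin (2 * n) → Q}
    (h : IsComp c f) {k : ℕ} (hk : ∀ x, fsz f (f x) ≤ k) : mx c ≤ k := by
  apply Finset.sup_le
  intro x _
  rw [orbit_ncard h]; exact hk x

/-- component map after insertion in the component of `x` -/
def fins {n : ℕ} {Q : Type} (f : Fin (2 * n) → Q) (x : Fin (2 * n)) (p : Fin (2 * (n + 1))) : Q :=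
  Sum.elim f (fun _ => f x) ((eSum n).symm p)

def fself {n : ℕ} {Q : Type} (f : Fin (2 * n) → Q) (p : Fin (2 * (n + 1))) : Option Q :=
  Sum.elim (fun u => some (f u)) (fun _ => none) ((eSum n).symm p)

lemma forall_eSum {n : ℕ} {P : Fin (2 * (n + 1)) → Prop} (h1 : ∀ u, P (eSum n (Sum.inl u)))
    (h2 : P (eSum n (Sum.inr 0))) (h3 : P (eSum n (Sum.inr 1))) (p) : P p := by
  rw [← (eSum n).apply_symm_apply p]
  rcases (eSum n).symm p with u | u
  · exact h1 u
  · fin_cases u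
    · exact h2
    · exact h3

lemma ins_self_inl {n : ℕ} (c : Cyclation n) (u) :
    (ins (c, none)).1 (eSum n (Sum.inl u)) = eSum n (Sum.inl (c.1 u)) := by
  simp [ins, insPerm, zOf]
lemma ins_self_inr0 {n : ℕ} (c : Cyclation n) :
    (ins (c, none)).1 (eSum n (Sum.inr 0)) = eSum n (Sum.inr 1) := by
  simp [ins, insPerm, zOf]
lemma ins_self_inr1 {n : ℕ} (c : Cyclation n) :
    (ins (c, none)).1 (eSum n (Sum.inr 1)) = eSum n (Sum.inr 0) := by
  simp [ins, insPerm, zOf]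

lemma cinv {n : ℕ} (c : Cyclation n) (x) : c.1 (c.1 x) = x :=
  congrArg (fun p : Perm _ => p x) c.2.2

lemma ins_some_x {n : ℕ} (c : Cyclation n) (x) :
    (ins (c, some x)).1 (eSum n (Sum.inl x)) = eSum n (Sum.inr 0) := by
  have : swap (Sum.inr 1) (Sum.inl x) (Sum.inr 0 : Fin (2 * n) ⊕ Fin 2) = Sum.inr 0 :=
    swap_apply_of_ne_of_ne (by simp) (by simp)
  simp [ins, insPerm, zOf, this]
lemma ins_some_inr0 {n : ℕ} (c : Cyclation n) (x) :
    (ins (c, some x)).1 (eSum n (Sum.inr 0)) = eSum n (Sum.inl x) := by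
  rw [← ins_some_x c x, cinv]
lemma ins_some_inr1 {n : ℕ} (c : Cyclation n) (x) :
    (ins (c, some x)).1 (eSum n (Sum.inr 1)) = eSum n (Sum.inl (c.1 x)) := by
  have : swap (Sum.inr 1) (Sum.inl x) (Sum.inl (c.1 x) : Fin (2 * n) ⊕ Fin 2) = Sum.inl (c.1 x) :=
    swap_apply_of_ne_of_ne (by simp) (by simpa using c.2.1 x)
  simp [ins, insPerm, zOf, this]
lemma ins_some_y {n : ℕ} (c : Cyclation n) (x) :
    (ins (c, some x)).1 (eSum n (Sum.inl (c.1 x))) = eSum n (Sum.inr 1) := by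
  rw [← ins_some_inr1 c x, cinv]
lemma ins_some_inl {n : ℕ} (c : Cyclation n) (x u) (h : u ≠ x) (h' : u ≠ c.1 x) :
    (ins (c, some x)).1 (eSum n (Sum.inl u)) = eSum n (Sum.inl (c.1 u)) := by
  have h1 : swap (Sum.inr 1) (Sum.inl x) (Sum.inl u : Fin (2 * n) ⊕ Fin 2) = Sum.inl u :=
    swap_apply_of_ne_of_ne (by simp) (by simpa using h)
  have h2 : swap (Sum.inr 1) (Sum.inl x) (Sum.inl (c.1 u) : Fin (2 * n) ⊕ Fin 2) = Sum.inl (c.1 u) :=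
    swap_apply_of_ne_of_ne (by simp) (by
      simp only [ne_eq, Sum.inl.injEq]
      intro e; apply h'; rw [← e, cinv])
  simp [ins, insPerm, zOf, h1, h2]

lemma isComp_self {n : ℕ} {c : Cyclation n} {Q : Type} {f : Fin (2 * n) → Q} (h : IsComp c f) :
    IsComp (ins (c, none)) (fself f) := by
  have hl : ∀ u v, Rel c u v → Rel (ins (c, none)) (eSum n (Sum.inl u)) (eSum n (Sum.inl v)) := by
    intro u v huv
    refine Rel.min c (fun u v => Rel (ins (c, none)) (eSum n (Sum.inl u)) (eSum n (Sum.inl v)))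
      ⟨fun _ => Rel.refl _ _, fun h => h.symm, fun h h' => h.trans h'⟩ ?_ ?_ huv
    · intro x
      rw [← ins_self_inl]; exact Rel.mu _ _
    · intro x
      rw [← interval_inl]; exact Rel.sigma _ _
  have h01 : Rel (ins (c, none)) (eSum n (Sum.inr 0)) (eSum n (Sum.inr 1)) := by
    rw [← interval_inr0]; exact Rel.sigma _ _
  apply IsComp.mk'
  · intro t
    rcases t with _ | t
    · exact ⟨eSum n (Sum.inr 0), by simp [fself]⟩
    · obtain ⟨x, rfl⟩ := h.surj t
      exact ⟨eSum n (Sum.inl x), by simp [fself]⟩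
  · apply forall_eSum
    · intro u; rw [ins_self_inl]; simp [fself, h.mu]
    · rw [ins_self_inr0]; simp [fself]
    · rw [ins_self_inr1]; simp [fself]
  · apply forall_eSum
    · intro u; rw [interval_inl]; simp [fself, h.sigma]
    · rw [interval_inr0]; simp [fself]
    · rw [interval_inr1]; simp [fself]
  · apply forall_eSum
    · intro u
      apply forall_eSum
      · intro v huv
        simp only [fself, symm_apply_apply, Sum.elim_inl, Option.some.injEq] at huv
        exact hl _ _ ((h.iff _ _).1 huv)
      · simp [fself]
      · simp [fself]
    · apply forall_eSum
      · simp [fself]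
      · intro _; exact Rel.refl _ _
      · intro _; exact h01
    · apply forall_eSum
      · simp [fself]
      · intro _; exact h01.symm
      · intro _; exact Rel.refl _ _

lemma isComp_ins {n : ℕ} {c : Cyclation n} {Q : Type} {f : Fin (2 * n) → Q} (h : IsComp c f) (x) :
    IsComp (ins (c, some x)) (fins f x) := by
  set c' := ins (c, some x) with hc'
  have h01 : Rel c' (eSum n (Sum.inr 0)) (eSum n (Sum.inr 1)) := by
    rw [← interval_inr0]; exact Rel.sigma _ _
  have h0 : Rel c' (eSum n (Sum.inl x)) (eSum n (Sum.inr 0)) := by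
    rw [← ins_some_x c x]; exact Rel.mu _ _
  have h1 : Rel c' (eSum n (Sum.inl (c.1 x))) (eSum n (Sum.inr 1)) := by
    rw [← ins_some_y c x]; exact Rel.mu _ _
  have hxy := h0.trans (h01.trans h1.symm)
  have hl : ∀ u v, Rel c u v → Rel c' (eSum n (Sum.inl u)) (eSum n (Sum.inl v)) := by
    intro u v huv
    refine Rel.min c (fun u v => Rel c' (eSum n (Sum.inl u)) (eSum n (Sum.inl v)))
      ⟨fun _ => Rel.refl _ _, fun h => h.symm, fun h h' => h.trans h'⟩ ?_ ?_ huv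
    · intro u
      by_cases hu : u = x
      · subst hu; exact hxy
      by_cases hu' : u = c.1 x
      · subst hu'; rw [cinv]; exact hxy.symm
      rw [← ins_some_inl c x u hu hu']; exact Rel.mu _ _
    · intro x
      rw [← interval_inl]; exact Rel.sigma _ _
  have key : ∀ p, ∃ u, Rel c' p (eSum n (Sum.inl u)) ∧ fins f x p = f u := by
    apply forall_eSum
    · intro u; exact ⟨u, Rel.refl _ _, by simp [fins]⟩
    · exact ⟨x, h0.symm, by simp [fins]⟩
    · exact ⟨x, h01.symm.trans h0.symm, by simp [fins]⟩
  apply IsComp.mk'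
  · intro t
    obtain ⟨x, rfl⟩ := h.surj t
    exact ⟨eSum n (Sum.inl x), by simp [fins]⟩
  · apply forall_eSum
    · intro u
      by_cases hu : u = x
      · subst hu; rw [ins_some_x]; simp [fins]
      by_cases hu' : u = c.1 x
      · subst hu'; rw [ins_some_y]; simp [fins, h.mu]
      rw [ins_some_inl c x u hu hu']; simp [fins, h.mu]
    · rw [ins_some_inr0]; simp [fins]
    · rw [ins_some_inr1]; simp [fins, h.mu]
  · apply forall_eSum
    · intro u; rw [interval_inl]; simp [fins, h.sigma]
    · rw [interval_inr0]; simp [fins]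
    · rw [interval_inr1]; simp [fins]
  · intro p q hpq
    obtain ⟨u, hu, hu'⟩ := key p
    obtain ⟨v, hv, hv'⟩ := key q
    refine hu.trans (Rel.trans (hl u v ?_) hv.symm)
    rw [← h.iff, ← hu', ← hv', hpq]

lemma fsz_sum {n : ℕ} {Q : Type} (g : Fin (2 * n) ⊕ Fin 2 → Q) (t : Q) [DecidableEq Q] :
    fsz (fun p => g ((eSum n).symm p)) t = fsz (fun u => g (Sum.inl u)) t +
      ((if g (Sum.inr 0) = t then 1 else 0) + (if g (Sum.inr 1) = t then 1 else 0)) := by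
  unfold fsz
  simp only [Finset.card_filter]
  rw [(eSum n).symm.sum_comp (fun p => if g p = t then 1 else 0), Fintype.sum_sum_type, Fin.sum_univ_two]

lemma fsz_self_none {n : ℕ} {Q : Type} (f : Fin (2 * n) → Q) : fsz (fself f) none = 2 := by
  classical
  have := fsz_sum (n := n) (Sum.elim (fun u => some (f u)) (fun _ => none)) none
  simp at this
  unfold fself; rw [this]; simp [fsz]

lemma fsz_self_some {n : ℕ} {Q : Type} (f : Fin (2 * n) → Q) (t) :
    fsz (fself f) (some t) = fsz f t := by
  classical
  have := fsz_sum (n := n) (Sum.elim (fun u => some (f u)) (fun _ => none)) (some t)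
  simp at this
  unfold fself; rw [this]; simp [fsz]

lemma fsz_ins {n : ℕ} {Q : Type} [DecidableEq Q] (f : Fin (2 * n) → Q) (x t) :
    fsz (fins f x) t = fsz f t + if t = f x then 2 else 0 := by
  have := fsz_sum (n := n) (Sum.elim f (fun _ => f x)) t
  unfold fins; rw [this]
  by_cases ht : f x = t
  · simp [ht]
  · simp [ht, Ne.symm ht]

noncomputable def DD : Derivation ℝ (MvPolynomial ℕ ℝ) (MvPolynomial ℕ ℝ) :=
  mkDerivation ℝ (fun s => (s : MvPolynomial ℕ ℝ) * X (s + 2))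

lemma DD_prod {ι : Type} [DecidableEq ι] (s : Finset ι) (a : ι → MvPolynomial ℕ ℝ) :
    DD (∏ i ∈ s, a i) = ∑ i ∈ s, (∏ j ∈ s.erase i, a j) * DD (a i) := by
  induction s using Finset.induction_on with
  | empty => simp
  | insert i s hi ih =>
    rw [Finset.prod_insert hi, Derivation.leibniz, ih, Finset.sum_insert hi,
      Finset.erase_insert hi, smul_eq_mul, smul_eq_mul, Finset.mul_sum, add_comm]
    congr 1
    apply Finset.sum_congr rfl
    intro j hj
    have : i ≠ j := by rintro rfl; exact hi hj
    rw [Finset.erase_insert_of_ne this, Finset.prod_insert (by simp [hi]), mul_assoc]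

lemma wt_self {n : ℕ} (c : Cyclation n) : wt (ins (c, none)) = X 2 * wt c := by
  rw [wt_eq (isComp_self (isComp_qmk c)), Fintype.prod_option, fsz_self_none]
  simp_rw [fsz_self_some]; rfl

lemma wt_ins {n : ℕ} (c : Cyclation n) : ∑ x, wt (ins (c, some x)) = DD (wt c) := by
  classical
  have h1 : ∀ x, wt (ins (c, some x)) = (fun t => (∏ j ∈ Finset.univ.erase t,
      X (fsz (qmk c) j)) * X (fsz (qmk c) t + 2)) (qmk c x) := by
    intro x
    rw [wt_eq (isComp_ins (isComp_qmk c) x), ← Finset.prod_erase_mul _ _ (Finset.mem_univ (qmk c x))]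
    simp_rw [fsz_ins]
    simp only [if_true]
    congr 1
    apply Finset.prod_congr rfl
    intro j hj
    rw [if_neg (Finset.ne_of_mem_erase hj), add_zero]
  rw [Finset.sum_congr rfl (fun x _ => h1 x)]
  rw [← Fintype.sum_fiberwise' (qmk c) (fun t => (∏ j ∈ Finset.univ.erase t,
      X (fsz (qmk c) j)) * X (fsz (qmk c) t + 2)), wt, DD_prod]
  apply Finset.sum_congr rfl
  intro t _
  rw [Finset.sum_const, DD, mkDerivation_X]
  simp only [nsmul_eq_mul, Finset.card_univ]
  have : (Fintype.card {x // qmk c x = t}) = fsz (qmk c) t := by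
    unfold fsz; rw [Fintype.card_subtype]; congr!
  rw [this]; ring

noncomputable def ZZ (n : ℕ) : MvPolynomial ℕ ℝ := ∑ c : Cyclation n, wt c

lemma ZZ_succ (n : ℕ) : ZZ (n + 1) = X 2 * ZZ n + DD (ZZ n) := by
  unfold ZZ
  rw [sum_ins, Finset.sum_add_distrib, map_sum, Finset.mul_sum]
  simp_rw [wt_self, wt_ins]

lemma card_zero : Fintype.card (Cyclation 0) = 1 := by
  rw [Fintype.card_eq_one_iff]
  exact ⟨⟨1, fun x => x.elim0, by simp⟩, fun c => Subtype.ext (Equiv.ext fun x => x.elim0)⟩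

lemma ZZ_zero : ZZ 0 = 1 := by
  unfold ZZ
  have : ∀ c : Cyclation 0, wt c = 1 := by
    intro c
    rw [wt_eq (c := c) (Q := Fin 0) (f := fun x => x) ⟨fun x => x.elim0, fun x => x.elim0⟩]
    simp
  simp [this, card_zero]

lemma card_succ (n : ℕ) :
    Fintype.card (Cyclation (n + 1)) = (2 * n + 1) * Fintype.card (Cyclation n) := by
  have := sum_ins (n := n) (fun _ => 1)
  simp at this
  rw [this]; ring

lemma sum_longest_succ (n : ℕ) :
    (2 * n + 3) * ∑ c : Cyclation n, longestCycle c ≤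
      ∑ c : Cyclation (n + 1), longestCycle c := by
  classical
  rw [sum_ins, Finset.mul_sum]
  apply Finset.sum_le_sum
  intro c _
  have h := isComp_qmk c
  have h1 : longestCycle c ≤ longestCycle (ins (c, none)) := by
    rw [longestCycle_eq, longestCycle_eq]
    apply Nat.div_le_div_right
    apply mx_le h
    intro x
    have := le_mx (isComp_self h) (eSum n (Sum.inl x))
    simpa [fself, ← fsz_self_some (qmk c)] using this
  have h2 : ∀ x, longestCycle c + (if fsz (qmk c) (qmk c x) = mx c then 1 else 0) ≤
      longestCycle (ins (c, some x)) := by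
    intro x
    rw [longestCycle_eq, longestCycle_eq]
    split_ifs with hx
    · have := le_mx (isComp_ins h x) (eSum n (Sum.inl x))
      rw [fsz_ins] at this
      simp [fins, hx] at this
      omega
    · rw [add_zero]
      apply Nat.div_le_div_right
      apply mx_le h
      intro y
      have := le_mx (isComp_ins h x) (eSum n (Sum.inl y))
      rw [fsz_ins] at this
      simp [fins] at this
      omega
  have h3 : mx c ≤ ∑ x : Fin (2 * n), (if fsz (qmk c) (qmk c x) = mx c then 1 else 0) := by
    rcases Nat.eq_zero_or_pos n with rfl | hn
    · simp [mx]
    · have : Nonempty (Fin (2 * n)) := ⟨⟨0, by omega⟩⟩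
      obtain ⟨x, -, hx⟩ := Finset.exists_mem_eq_sup Finset.univ Finset.univ_nonempty
        (fun x : Fin (2 * n) => (MulAction.orbit (cycGroup c) x).ncard)
      change mx c = _ at hx
      rw [orbit_ncard h] at hx
      rw [← Finset.card_filter]
      conv_lhs => rw [hx]
      unfold fsz
      apply Finset.card_le_card
      intro y hy
      simp only [Finset.mem_filter, Finset.mem_univ, true_and] at hy ⊢
      rw [hy, hx]; rfl
  have h4 := Finset.sum_le_sum (s := Finset.univ) (fun x _ => h2 x)
  rw [Finset.sum_add_distrib] at h4
  simp only [Finset.sum_const, Finset.card_univ, Fintype.card_fin, smul_eq_mul] at h4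
  have h5 : 2 * longestCycle c ≤ mx c := by rw [longestCycle_eq]; omega
  linarith


noncomputable def zz (n : ℕ) : MvPolynomial ℕ ℝ := C (1 / ((2:ℝ) ^ n * n.factorial)) * ZZ n

lemma zz_zero : zz 0 = 1 := by simp [zz, ZZ_zero]

lemma DD_C (a : ℝ) : DD (C a) = 0 := derivation_C DD a

lemma zz_succ (n : ℕ) : C (2 * ((n:ℝ) + 1)) * zz (n + 1) = X 2 * zz n + DD (zz n) := by
  have h : 2 * ((n:ℝ) + 1) * (1 / (2 ^ (n + 1) * (n + 1).factorial)) =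
      1 / ((2:ℝ) ^ n * n.factorial) := by
    rw [Nat.factorial_succ]; push_cast; field_simp; ring
  unfold zz
  rw [ZZ_succ, ← mul_assoc, ← C_mul, h, Derivation.leibniz, DD_C]
  simp only [smul_eq_mul, mul_zero, add_zero]
  ring

lemma zz_rec (n : ℕ) : C (2 * (n:ℝ)) * zz n =
    ∑ l ∈ Finset.range n, X (2 * (l + 1)) * zz (n - 1 - l) := by
  induction n with
  | zero => simp
  | succ n ih =>
    rcases Nat.eq_zero_or_pos n with rfl | hn
    · have := zz_succ 0
      simp [zz_zero] at this ⊢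
      exact this
    have hC : C (2 * (n:ℝ)) ≠ (0 : MvPolynomial ℕ ℝ) := by
      rw [Ne, C_eq_zero]; positivity
    apply mul_left_cancel₀ hC
    have h1 : C (2 * (n:ℝ)) * (C (2 * ((n + 1 : ℕ):ℝ)) * zz (n + 1)) =
        X 2 * (C (2 * (n:ℝ)) * zz n) + DD (C (2 * (n:ℝ)) * zz n) := by
      push_cast
      rw [zz_succ, Derivation.leibniz, DD_C]
      simp only [smul_eq_mul, mul_zero, add_zero]
      ring
    rw [h1, ih, map_sum, Finset.mul_sum, ← Finset.sum_add_distrib]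
    have h2 : ∀ l ∈ Finset.range n, X 2 * (X (2 * (l + 1)) * zz (n - 1 - l)) +
        DD (X (2 * (l + 1)) * zz (n - 1 - l)) =
        C (2 * ((n:ℝ) - l)) * (X (2 * (l + 1)) * zz (n - l)) +
        C (2 * ((l:ℝ) + 1)) * (X (2 * (l + 1 + 1)) * zz (n - (l + 1))) := by
      intro l hl
      rw [Finset.mem_range] at hl
      obtain ⟨m, rfl⟩ : ∃ m, n = m + 1 + l := ⟨n - 1 - l, by omega⟩
      have e1 : m + 1 + l - 1 - l = m := by omega
      have e2 : m + 1 + l - l = m + 1 := by omega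
      have e3 : m + 1 + l - (l + 1) = m := by omega
      have e4 : 2 * (l + 1 + 1) = 2 * (l + 1) + 2 := by ring
      rw [e1, e2, e3, e4, Derivation.leibniz]
      have hx : DD (X (2 * (l + 1))) = C (2 * ((l:ℝ) + 1)) * X (2 * (l + 1) + 2) := by
        rw [DD, mkDerivation_X]; congr 1
        rw [← map_natCast (C : ℝ →+* MvPolynomial ℕ ℝ)]; congr 1; push_cast; ring
      have e5 : (2 * (((m + 1 + l : ℕ):ℝ) - l)) = 2 * ((m:ℝ) + 1) := by push_cast; ring
      have hz : DD (zz m) = C (2 * ((m:ℝ) + 1)) * zz (m + 1) - X 2 * zz m := by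
        rw [zz_succ]; ring
      rw [hx, e5, smul_eq_mul, smul_eq_mul, hz]
      ring
    rw [Finset.sum_congr rfl h2, Finset.sum_add_distrib]
    have h3 : ∑ l ∈ Finset.range n, C (2 * ((n:ℝ) - l)) * (X (2 * (l + 1)) * zz (n - l)) =
        ∑ l ∈ Finset.range (n + 1), C (2 * ((n:ℝ) - l)) * (X (2 * (l + 1)) * zz (n - l)) := by
      rw [Finset.sum_range_succ]; simp
    have h4 : ∑ l ∈ Finset.range n, C (2 * ((l:ℝ) + 1)) * (X (2 * (l + 1 + 1)) * zz (n - (l + 1))) =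
        ∑ l ∈ Finset.range (n + 1), C (2 * (l:ℝ)) * (X (2 * (l + 1)) * zz (n - l)) := by
      rw [Finset.sum_range_succ']; simp
    rw [h3, h4, ← Finset.sum_add_distrib, Finset.mul_sum]
    apply Finset.sum_congr rfl
    intro l _
    rw [← add_mul, ← C_add]
    congr 2
    ring

/-- normalised number of cyclations -/
noncomputable def hh (n : ℕ) : ℝ := Fintype.card (Cyclation n) / ((2:ℝ) ^ n * n.factorial)

open Classical in
/-- normalised number of cyclations with longest cycle at most `k` -/
noncomputable def gg (k n : ℕ) : ℝ :=
  (Finset.univ.filter fun c : Cyclation n => longestCycle c ≤ k).card / ((2:ℝ) ^ n * n.factorial)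

lemma wt_eval (k n : ℕ) (c : Cyclation n) :
    eval (fun s => if s / 2 ≤ k then (1:ℝ) else 0) (wt c) = if longestCycle c ≤ k then 1 else 0 := by
  unfold wt
  rw [map_prod]
  simp only [eval_X]
  have h := isComp_qmk c
  split_ifs with hk
  · apply Finset.prod_eq_one
    intro t _
    obtain ⟨x, rfl⟩ := h.surj t
    rw [if_pos]
    rw [longestCycle_eq] at hk
    have := le_mx h x
    omega
  · by_contra hne
    rw [← Ne, Finset.prod_ne_zero_iff] at hne
    apply hk
    rw [longestCycle_eq]
    have : mx c ≤ 2 * k + 1 := by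
      apply mx_le h
      intro x
      have := hne (qmk c x) (Finset.mem_univ _)
      simp at this
      omega
    omega

lemma gg_eq (k n : ℕ) : gg k n = eval (fun s => if s / 2 ≤ k then (1:ℝ) else 0) (zz n) := by
  unfold zz ZZ gg
  rw [map_mul, map_sum, eval_C]
  simp_rw [wt_eval]
  rw [Finset.card_filter]
  push_cast
  rw [div_eq_inv_mul, one_div]

lemma hh_eq (n : ℕ) : hh n = eval (fun _ => (1:ℝ)) (zz n) := by
  unfold zz ZZ hh
  rw [map_mul, map_sum, eval_C]
  have : ∀ c : Cyclation n, eval (fun _ => (1:ℝ)) (wt c) = 1 := by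
    intro c; simp [wt]
  simp [this, div_eq_inv_mul]

lemma gg_rec (k n : ℕ) : 2 * (n:ℝ) * gg k n =
    ∑ l ∈ Finset.range n, (if l + 1 ≤ k then (1:ℝ) else 0) * gg k (n - 1 - l) := by
  have := congrArg (eval (fun s => if s / 2 ≤ k then (1:ℝ) else 0)) (zz_rec n)
  simp only [map_mul, map_sum, eval_C, eval_X, ← gg_eq] at this
  rw [this]
  simp

lemma hh_rec (n : ℕ) : 2 * (n:ℝ) * hh n =
    ∑ l ∈ Finset.range n, 1 * hh (n - 1 - l) := by
  have := congrArg (eval (fun _ => (1:ℝ))) (zz_rec n)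
  simp only [map_mul, map_sum, eval_C, eval_X, ← hh_eq] at this
  exact this

lemma gg_zero (k : ℕ) : gg k 0 = 1 := by rw [gg_eq, zz_zero]; simp
lemma hh_zero : hh 0 = 1 := by rw [hh_eq, zz_zero]; simp

lemma gg_nonneg (k n : ℕ) : 0 ≤ gg k n := by unfold gg; positivity
lemma gg_le (k n : ℕ) : gg k n ≤ hh n := by
  classical
  unfold gg hh
  gcongr
  apply Finset.card_le_univ

lemma hh_succ (n : ℕ) : 2 * ((n:ℝ) + 1) * hh (n + 1) = (2 * n + 1) * hh n := by
  unfold hh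
  rw [card_succ, Nat.factorial_succ]; push_cast; field_simp; ring

lemma hh_pos (n : ℕ) : 0 < hh n := by
  induction n with
  | zero => simp [hh_zero]
  | succ n ih =>
    have := hh_succ n
    have h2 : 0 < 2 * ((n:ℝ) + 1) * hh (n + 1) := by rw [this]; positivity
    exact (mul_pos_iff_of_pos_left (by positivity)).1 h2

lemma hh_le_one (n : ℕ) : hh n ≤ 1 := by
  induction n with
  | zero => simp [hh_zero]
  | succ n ih =>
    have := hh_succ n
    have := hh_pos n
    nlinarith [hh_pos (n+1)]

lemma card_pos' (n : ℕ) : (0:ℝ) < Fintype.card (Cyclation n) := by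
  have := hh_pos n
  unfold hh at this
  exact (div_pos_iff_of_pos_right (by positivity)).1 this

lemma longestCycle_le {n : ℕ} (c : Cyclation n) : longestCycle c ≤ n := by
  rw [longestCycle_eq]
  have : mx c ≤ 2 * n := by
    apply mx_le (isComp_qmk c)
    intro x
    unfold fsz
    refine (Finset.card_le_univ _).trans ?_
    simp
  omega

/-- `h_n E[M_n] = ∑_k (h_n - g_n(k))` -/
lemma hh_mul_ExM (n : ℕ) : HasSum (fun k => hh n - gg k n) (hh n * ExM n) := by
  classical
  have h1 : ∀ k, hh n - gg k n =
      ∑ c : Cyclation n, (if k < longestCycle c then (1:ℝ) else 0) / (2 ^ n * n.factorial) := by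
    intro k
    unfold hh gg
    rw [← sub_div, ← Finset.sum_div]
    congr 1
    rw [Finset.card_filter, ← Finset.card_univ, Finset.card_eq_sum_ones]
    push_cast
    rw [← Finset.sum_sub_distrib]
    apply Finset.sum_congr rfl
    intro c _
    by_cases h : longestCycle c ≤ k
    · simp [h]
    · simp [h, not_le.1 h]
  have h2 : hh n * ExM n = ∑ c : Cyclation n, (longestCycle c : ℝ) / (2 ^ n * n.factorial) := by
    unfold hh ExM
    rw [← Finset.sum_div]
    have := card_pos' n
    field_simp
  simp_rw [h1]
  rw [h2]
  apply hasSum_sum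
  intro c _
  apply HasSum.div_const
  have h3 := hasSum_sum_of_ne_finset_zero (L := SummationFilter.unconditional ℕ) (f := fun k => if k < longestCycle c then (1:ℝ) else 0)
    (s := Finset.range (longestCycle c)) (by
      intro b hb; rw [Finset.mem_range] at hb; simp [hb])
  have h4 : ∑ k ∈ Finset.range (longestCycle c), (if k < longestCycle c then (1:ℝ) else 0) =
      longestCycle c := by
    rw [Finset.sum_congr rfl (g := fun _ => (1:ℝ))]
    · simp
    · intro k hk; rw [Finset.mem_range] at hk; simp [hk]
  rw [h4] at h3
  exact h3

noncomputable def bb (n : ℕ) : ℝ := ExM n / (2 * n + 1)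

lemma bb_mono : Monotone bb := by
  apply monotone_nat_of_le_succ
  intro n
  unfold bb ExM
  have h : ((2 * n + 3 : ℕ) : ℝ) * ∑ c : Cyclation n, (longestCycle c : ℝ) ≤
      ∑ c : Cyclation (n + 1), (longestCycle c : ℝ) := by
    exact_mod_cast sum_longest_succ n
  rw [card_succ]
  have := card_pos' n
  push_cast at h ⊢
  rw [div_div, div_div, div_le_div_iff₀ (by positivity) (by positivity)]
  calc _ = ((2 * (n:ℝ) + 3) * ∑ c : Cyclation n, (longestCycle c : ℝ)) *
      ((2 * n + 1) * (Fintype.card (Cyclation n))) := by ring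
    _ ≤ _ := by
      rw [mul_comm (Fintype.card (Cyclation n) : ℝ)]
      gcongr

lemma ExM_le (n : ℕ) : ExM n ≤ n := by
  unfold ExM
  rw [div_le_iff₀ (card_pos' n)]
  calc _ ≤ ∑ c : Cyclation n, (n : ℝ) := by
        apply Finset.sum_le_sum; intro c _; exact_mod_cast longestCycle_le c
    _ = _ := by simp [mul_comm]

lemma ExM_nonneg (n : ℕ) : 0 ≤ ExM n := by unfold ExM; positivity

lemma bb_le (n : ℕ) : bb n ≤ 1 := by
  unfold bb
  rw [div_le_one (by positivity)]
  have := ExM_le n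
  have : (0:ℝ) ≤ n := by positivity
  linarith

lemma bb_nonneg (n : ℕ) : 0 ≤ bb n := by
  unfold bb; have := ExM_nonneg n; positivity


lemma summable_bdd {a : ℕ → ℝ} (ha : ∀ n, |a n| ≤ 1) {x : ℝ} (hx : |x| < 1) :
    Summable (fun n => ‖a n * x ^ n‖) := by
  refine Summable.of_nonneg_of_le (fun _ => norm_nonneg _) (fun n => ?_)
    (summable_geometric_of_lt_one (abs_nonneg x) hx)
  rw [Real.norm_eq_abs, abs_mul, abs_pow]
  exact mul_le_of_le_one_left (by positivity) (ha n)

lemma summable_der {r : ℝ} (h0 : 0 ≤ r) (h1 : r < 1) : Summable (fun n : ℕ => n * r ^ (n - 1)) := by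
  rw [← summable_nat_add_iff 1]
  have h2 := (hasSum_coe_mul_geometric_of_norm_lt_one (𝕜 := ℝ) (r := r)
    (by rwa [Real.norm_eq_abs, abs_of_nonneg h0])).summable
  have h3 := summable_geometric_of_lt_one h0 h1
  refine (h2.add h3).congr fun n => ?_
  simp; ring

lemma der_bdd {a : ℕ → ℝ} (ha : ∀ n, |a n| ≤ 1) {r : ℝ} (n : ℕ) {y : ℝ} (hy : |y| ≤ r) :
    ‖a n * (n * y ^ (n - 1))‖ ≤ n * r ^ (n - 1) := by
  rw [Real.norm_eq_abs, abs_mul, abs_mul, abs_pow, Nat.abs_cast]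
  calc _ ≤ 1 * ((n:ℝ) * |y| ^ (n - 1)) := by gcongr; exact ha n
    _ ≤ _ := by rw [one_mul]; gcongr

lemma hasDerivAt_pow_series {a : ℕ → ℝ} (ha : ∀ n, |a n| ≤ 1) {x : ℝ} (hx : |x| < 1) :
    HasDerivAt (fun z => ∑' n, a n * z ^ n) (∑' n, a (n + 1) * ((n + 1) * x ^ n)) x := by
  obtain ⟨r, hr, hr1⟩ := exists_between hx
  have hr0 : 0 ≤ r := (abs_nonneg x).trans hr.le
  have h := hasDerivAt_tsum_of_isPreconnected (g := fun n z => a n * z ^ n)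
    (g' := fun n z => a n * (n * z ^ (n - 1))) (summable_der hr0 hr1)
    (t := Set.Ioo (-r) r) isOpen_Ioo isPreconnected_Ioo (y := x) (y₀ := x)
    (fun n y _ => (hasDerivAt_pow n y).const_mul (a n))
    (fun n y hy => der_bdd ha n (abs_lt.2 hy).le) (abs_lt.1 hr)
    (summable_bdd ha hx).of_norm (abs_lt.1 hr)
  convert! h using 1
  symm
  rw [Summable.tsum_eq_zero_add]
  · simp
  · exact (Summable.of_nonneg_of_le (fun _ => norm_nonneg _) (fun n => der_bdd ha n hr.le)
      (summable_der hr0 hr1)).of_norm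

lemma gf {f g : ℕ → ℝ} (hf : ∀ n, |f n| ≤ 1) (hg : ∀ n, |g n| ≤ 1) (g0 : g 0 = 1)
    (hrec : ∀ n : ℕ, 2 * (n:ℝ) * g n = ∑ l ∈ Finset.range n, f l * g (n - 1 - l))
    {x : ℝ} (hx : |x| < 1) :
    ∑' n, g n * x ^ n = Real.exp ((∑' l : ℕ, f l * x ^ (l + 1) / (l + 1)) / 2) := by
  let α : ℕ → ℝ := fun n => match n with
    | 0 => 0
    | l + 1 => f l / (l + 1)
  have hα : ∀ n, |α n| ≤ 1 := by
    intro n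
    rcases n with _ | l
    · simp [α]
    · simp only [α]
      rw [abs_div]
      apply div_le_one_of_le₀ _ (abs_nonneg _)
      rw [abs_of_nonneg (by positivity : (0:ℝ) ≤ l + 1)]
      have : (0:ℝ) ≤ l := by positivity
      linarith [hf l]
  have hA : ∀ y, |y| < 1 → ∑' n, α n * y ^ n = ∑' l : ℕ, f l * y ^ (l + 1) / (l + 1) := by
    intro y hy
    rw [Summable.tsum_eq_zero_add (summable_bdd hα hy).of_norm]
    simp only [α, zero_mul, zero_add]
    congr 1; ext l; ring
  have hA' : ∀ y, |y| < 1 → HasDerivAt (fun z => ∑' n, α n * z ^ n) (∑' n, f n * y ^ n) y := by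
    intro y hy
    convert! hasDerivAt_pow_series hα hy using 1
    congr 1; ext n; simp only [α]; field_simp
  have hG' : ∀ y, |y| < 1 → HasDerivAt (fun z => ∑' n, g n * z ^ n)
      ((∑' n, f n * y ^ n) * (∑' n, g n * y ^ n) / 2) y := by
    intro y hy
    convert! hasDerivAt_pow_series hg hy using 1
    rw [tsum_mul_tsum_eq_tsum_sum_range_of_summable_norm (summable_bdd hf hy) (summable_bdd hg hy),
      ← tsum_div_const]
    congr 1; ext n
    have h1 := hrec (n + 1)
    push_cast at h1
    have h2 : g (n + 1) * ((n + 1) * y ^ n) = (2 * ((n:ℝ) + 1) * g (n + 1)) * y ^ n / 2 := by ring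
    rw [h2, h1, Finset.sum_mul]
    congr 1
    apply Finset.sum_congr rfl
    intro l hl
    rw [Finset.mem_range] at hl
    have e : y ^ n = y ^ l * y ^ (n - l) := by rw [← pow_add]; congr 1; omega
    rw [e]
    ring
  have hψ : ∀ y ∈ Set.Ioo (-1:ℝ) 1, HasDerivAt (fun z => (∑' n, g n * z ^ n) *
      Real.exp (-(∑' n, α n * z ^ n) / 2)) 0 y := by
    intro y hy
    have hy := abs_lt.2 hy
    convert! (hG' y hy).mul (((hA' y hy).neg.div_const 2).exp) using 1
    simp only [Pi.neg_apply]
    ring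
  have hc := isOpen_Ioo.is_const_of_deriv_eq_zero (isPreconnected_Ioo)
    (fun y hy => (hψ y hy).differentiableAt.differentiableWithinAt)
    (fun y hy => (hψ y hy).deriv) (abs_lt.1 hx) (show (0:ℝ) ∈ Set.Ioo (-1:ℝ) 1 by norm_num)
  have z1 : ∑' n, g n * (0:ℝ) ^ n = 1 := by
    rw [tsum_eq_single 0 (by intro n hn; simp [hn])]; simp [g0]
  have z2 : ∑' n, α n * (0:ℝ) ^ n = 0 := by
    rw [tsum_eq_single 0 (by intro n hn; simp [hn])]; simp [α]
  rw [z1, z2, hA x hx] at hc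
  simp only [neg_zero, zero_div, Real.exp_zero, mul_one] at hc
  rw [neg_div, Real.exp_neg] at hc
  have := Real.exp_pos ((∑' l : ℕ, f l * x ^ (l + 1) / (l + 1)) / 2)
  field_simp at hc
  exact hc

lemma abs_hh (n : ℕ) : |hh n| ≤ 1 := by
  rw [abs_of_pos (hh_pos n)]; exact hh_le_one n
lemma abs_gg (k n : ℕ) : |gg k n| ≤ 1 := by
  rw [abs_of_nonneg (gg_nonneg k n)]; exact (gg_le k n).trans (hh_le_one n)

noncomputable def HH (x : ℝ) : ℝ := ∑' n, hh n * x ^ n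
noncomputable def GG (k : ℕ) (x : ℝ) : ℝ := ∑' n, gg k n * x ^ n
/-- tail of the logarithmic series -/
noncomputable def RR (k : ℕ) (x : ℝ) : ℝ := ∑' j : ℕ, x ^ (k + 1 + j) / (k + 1 + j)

lemma summable_log {x : ℝ} (hx : |x| < 1) : Summable (fun l : ℕ => x ^ (l + 1) / ((l:ℝ) + 1)) :=
  (Real.hasSum_pow_div_log_of_abs_lt_one hx).summable

lemma HH_eq {x : ℝ} (hx : |x| < 1) : HH x = Real.exp (-Real.log (1 - x) / 2) := by
  unfold HH
  rw [gf (f := fun _ => 1) (by simp) abs_hh hh_zero hh_rec hx]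
  simp only [one_mul]
  rw [(Real.hasSum_pow_div_log_of_abs_lt_one hx).tsum_eq]

lemma GG_eq (k : ℕ) {x : ℝ} (hx : |x| < 1) : GG k x = HH x * Real.exp (-RR k x / 2) := by
  unfold GG
  rw [gf (f := fun l => if l + 1 ≤ k then 1 else 0) (by intro n; split_ifs <;> simp) (abs_gg k)
    (gg_zero k) (gg_rec k) hx, HH_eq hx, ← (Real.hasSum_pow_div_log_of_abs_lt_one hx).tsum_eq,
    ← Real.exp_add]
  congr 1
  rw [← (summable_log hx).sum_add_tsum_nat_add k, RR]
  rw [tsum_eq_sum (s := Finset.range k)]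
  · have e1 : ∀ l ∈ Finset.range k, (if l + 1 ≤ k then (1:ℝ) else 0) * x ^ (l + 1) / (l + 1) =
        x ^ (l + 1) / (l + 1) := by
      intro l hl
      rw [Finset.mem_range] at hl
      rw [if_pos (by omega), one_mul]
    have e2 : ∀ j : ℕ, x ^ (j + k + 1) / (((j + k : ℕ):ℝ) + 1) = x ^ (k + 1 + j) / (k + 1 + j) := by
      intro j; push_cast; congr 1 <;> ring
    rw [Finset.sum_congr rfl e1]
    simp_rw [e2]
    ring
  · intro l hl
    rw [Finset.mem_range] at hl
    rw [if_neg (by omega)]; simp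

lemma hasSum_HH {x : ℝ} (hx : |x| < 1) : HasSum (fun n => hh n * x ^ n) (HH x) :=
  (summable_bdd abs_hh hx).of_norm.hasSum
lemma hasSum_GG (k) {x : ℝ} (hx : |x| < 1) : HasSum (fun n => gg k n * x ^ n) (GG k x) :=
  (summable_bdd (abs_gg k) hx).of_norm.hasSum

/-- `∑ (2n+1) h_n x^n = (1-x)^{-1} H(x)` -/
lemma hasSum_weights {x : ℝ} (hx : |x| < 1) :
    HasSum (fun n : ℕ => (2 * (n:ℝ) + 1) * hh n * x ^ n) (HH x / (1 - x)) := by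
  have h1 : HasDerivAt HH (∑' n, hh (n + 1) * ((n + 1) * x ^ n)) x := hasDerivAt_pow_series abs_hh hx
  have hx1 : 0 < 1 - x := by linarith [(abs_lt.1 hx).2]
  have h2 : HasDerivAt HH (HH x * (1 / (1 - x)) / 2) x := by
    have h3 : HasDerivAt (fun y => Real.exp (-Real.log (1 - y) / 2)) (HH x * (1 / (1 - x)) / 2) x := by
      have := ((((hasDerivAt_id x).const_sub 1).log hx1.ne').neg.div_const 2).exp
      convert! this using 1
      rw [HH_eq hx]; simp; ring
    refine h3.congr_of_eventuallyEq ?_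
    have : ∀ᶠ y in nhds x, |y| < 1 := (continuous_abs.tendsto x).eventually_lt_const hx
    filter_upwards [this] with y hy using HH_eq hy
  have h4 := h1.unique h2
  have hs : Summable (fun n : ℕ => hh (n + 1) * ((n + 1) * x ^ n)) := by
    have := (Summable.of_nonneg_of_le (fun _ => norm_nonneg _)
      (fun n => der_bdd abs_hh n le_rfl) (summable_der (abs_nonneg x) hx)).of_norm
    rw [← summable_nat_add_iff 1] at this
    simpa using this
  have h5 := (hs.hasSum.mul_left 2)
  rw [h4] at h5
  convert! h5 using 1
  · ext n
    rw [← hh_succ]; ring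
  · ring

/-- the key generating function identity -/
lemma key_gf {x : ℝ} (h0 : 0 ≤ x) (h1 : x < 1) :
    HasSum (fun k => HH x * (1 - Real.exp (-RR k x / 2)))
      (∑' n : ℕ, (2 * (n:ℝ) + 1) * hh n * x ^ n * bb n) := by
  have hx : |x| < 1 := by rwa [abs_of_nonneg h0]
  have e : ∀ n : ℕ, (2 * (n:ℝ) + 1) * hh n * x ^ n * bb n = hh n * ExM n * x ^ n := by
    intro n; unfold bb; field_simp
  have hrow : ∀ n, HasSum (fun k => (hh n - gg k n) * x ^ n) (hh n * ExM n * x ^ n) :=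
    fun n => (hh_mul_ExM n).mul_right _
  have hcol : ∀ k, HasSum (fun n => (hh n - gg k n) * x ^ n) (HH x * (1 - Real.exp (-RR k x / 2))) := by
    intro k
    have := (hasSum_HH hx).sub (hasSum_GG k hx)
    rw [GG_eq k hx] at this
    convert! this using 1
    · ext n; ring
    · ring
  have hs : Summable (fun n : ℕ => hh n * ExM n * x ^ n) := by
    refine Summable.of_nonneg_of_le (fun n => ?_) (fun n => ?_) (hasSum_weights hx).summable
    · have := hh_pos n; have := ExM_nonneg n; positivity
    · have := hh_pos n
      rw [← e]
      exact mul_le_of_le_one_right (by positivity) (bb_le n)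
  have hnn : ∀ p : ℕ × ℕ, 0 ≤ (hh p.1 - gg p.2 p.1) * x ^ p.1 := fun p =>
    mul_nonneg (sub_nonneg.2 (gg_le _ _)) (by positivity)
  have hp : Summable (fun p : ℕ × ℕ => (hh p.1 - gg p.2 p.1) * x ^ p.1) := by
    rw [summable_prod_of_nonneg hnn]
    refine ⟨fun n => (hrow n).summable, ?_⟩
    refine hs.congr fun n => ?_
    exact ((hrow n).tsum_eq).symm
  simp_rw [e]
  have h2 : ∑' n, hh n * ExM n * x ^ n = ∑' p : ℕ × ℕ, (hh p.1 - gg p.2 p.1) * x ^ p.1 := by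
    rw [hp.tsum_prod' (fun n => (hrow n).summable)]
    congr 1; ext n; exact ((hrow n).tsum_eq).symm
  rw [h2]
  have h3 := (Equiv.prodComm ℕ ℕ).hasSum_iff.2 hp.hasSum
  exact h3.prod_fiberwise hcol

section Limits
open Filter Topology Set MeasureTheory

/-! Riemann sums and the exponential integral -/

lemma riem_upper {f : ℝ → ℝ} {a s : ℝ} (hs : 0 < s) (hf : AntitoneOn f (Ioi a))
    (hn : ∀ x ∈ Ioi a, 0 ≤ f x) (hi : IntegrableOn f (Ioi a)) :
    Summable (fun k : ℕ => f (a + s * (k + 1))) ∧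
      s * ∑' k : ℕ, f (a + s * (k + 1)) ≤ ∫ x in Ioi a, f x := by
  have step : ∀ k : ℕ, s * f (a + s * (k + 1)) ≤
      (∫ x in Ioi (a + s * k), f x) - ∫ x in Ioi (a + s * (k + 1)), f x := by
    intro k
    have hk : 0 ≤ s * (k : ℝ) := by positivity
    have hle : a + s * (k:ℝ) ≤ a + s * (k + 1) := by nlinarith
    have hi' : IntegrableOn f (Ioi (a + s * k)) := hi.mono_set (Ioi_subset_Ioi (by linarith))
    rw [intervalIntegral.integral_Ioi_sub_Ioi hi' hle]
    have h1 : ∫ x in (a + s * (k:ℝ))..(a + s * (k + 1)), f (a + s * (k + 1)) =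
        s * f (a + s * (k + 1)) := by
      rw [intervalIntegral.integral_const, smul_eq_mul]; ring
    rw [← h1, intervalIntegral.integral_of_le hle, intervalIntegral.integral_of_le hle]
    refine setIntegral_mono_on (by simp) (hi'.mono_set Ioc_subset_Ioi_self) measurableSet_Ioc ?_
    intro x hx
    refine hf ?_ ?_ hx.2
    · have := hx.1; simp only [mem_Ioi]; linarith
    · simp only [mem_Ioi]; nlinarith
  have hnn : ∀ k : ℕ, 0 ≤ f (a + s * (k + 1)) := fun k => hn _ (by simp only [mem_Ioi]; nlinarith [Nat.cast_nonneg (α := ℝ) k])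
  have hsum : ∀ N : ℕ, s * ∑ k ∈ Finset.range N, f (a + s * (k + 1)) ≤ ∫ x in Ioi a, f x := by
    intro N
    rw [Finset.mul_sum]
    calc _ ≤ ∑ k ∈ Finset.range N, ((∫ x in Ioi (a + s * k), f x) - ∫ x in Ioi (a + s * ((k+1 : ℕ) : ℝ)), f x) := by
          refine Finset.sum_le_sum fun k _ => ?_
          push_cast
          exact step k
      _ = (∫ x in Ioi a, f x) - ∫ x in Ioi (a + s * N), f x := by
          rw [Finset.sum_range_sub' (fun k : ℕ => ∫ x in Ioi (a + s * k), f x)]; simp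
      _ ≤ _ := by
          have : 0 ≤ ∫ x in Ioi (a + s * N), f x := by
            refine setIntegral_nonneg measurableSet_Ioi fun x hx => hn x ?_
            have : 0 ≤ s * (N : ℝ) := by positivity
            simp only [mem_Ioi] at hx ⊢; linarith
          linarith
  have hsum' : ∀ N : ℕ, ∑ k ∈ Finset.range N, f (a + s * (k + 1)) ≤ (∫ x in Ioi a, f x) / s := by
    intro N
    rw [le_div_iff₀ hs, mul_comm]; exact hsum N
  refine ⟨summable_of_sum_range_le hnn hsum', ?_⟩
  have := Real.tsum_le_of_sum_range_le hnn hsum'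
  rwa [le_div_iff₀ hs, mul_comm] at this

lemma riem_lower {f : ℝ → ℝ} {c s : ℝ} (hs : 0 < s) (hf : AntitoneOn f (Ici c))
    (hi : IntegrableOn f (Ioi c)) (hn : ∀ x ∈ Ici c, 0 ≤ f x)
    (hsm : Summable (fun k : ℕ => f (c + s * k))) :
    ∫ x in Ioi c, f x ≤ s * ∑' k : ℕ, f (c + s * k) := by
  have step : ∀ k : ℕ,
      (∫ x in Ioi (c + s * k), f x) - ∫ x in Ioi (c + s * ((k + 1 : ℕ) : ℝ)), f x ≤ s * f (c + s * k) := by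
    intro k
    have hk : 0 ≤ s * (k : ℝ) := by positivity
    have hle : c + s * (k:ℝ) ≤ c + s * ((k + 1 : ℕ) : ℝ) := by push_cast; nlinarith
    have hi' : IntegrableOn f (Ioi (c + s * k)) := hi.mono_set (Ioi_subset_Ioi (by linarith))
    rw [intervalIntegral.integral_Ioi_sub_Ioi hi' hle]
    have h1 : ∫ x in (c + s * (k:ℝ))..(c + s * ((k + 1 : ℕ) : ℝ)), f (c + s * k) =
        s * f (c + s * k) := by
      rw [intervalIntegral.integral_const, smul_eq_mul]; push_cast; ring
    rw [← h1, intervalIntegral.integral_of_le hle, intervalIntegral.integral_of_le hle]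
    refine setIntegral_mono_on (hi'.mono_set Ioc_subset_Ioi_self) (by simp) measurableSet_Ioc ?_
    intro x hx
    refine hf ?_ ?_ hx.1.le
    · simp only [mem_Ici]; linarith
    · have := hx.1; simp only [mem_Ici]; linarith
  have hb : Tendsto (fun N : ℕ => c + s * (N:ℝ)) atTop atTop :=
    tendsto_atTop_add_const_left _ _ ((tendsto_natCast_atTop_atTop).const_mul_atTop hs)
  have ht := intervalIntegral_tendsto_integral_Ioi c hi hb
  refine le_of_tendsto ht (Eventually.of_forall fun N => ?_)
  rw [← intervalIntegral.integral_Ioi_sub_Ioi hi (by have : 0 ≤ s * (N:ℝ) := by positivity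
                                                     linarith)]
  have h2 := Finset.sum_range_sub' (fun k : ℕ => ∫ x in Ioi (c + s * k), f x) N
  simp only [Nat.cast_zero, mul_zero, add_zero] at h2
  rw [← h2]
  calc _ ≤ ∑ k ∈ Finset.range N, s * f (c + s * k) := Finset.sum_le_sum fun k _ => step k
    _ = s * ∑ k ∈ Finset.range N, f (c + s * k) := by rw [Finset.mul_sum]
    _ ≤ _ := by
      refine mul_le_mul_of_nonneg_left ?_ hs.le
      refine hsm.sum_le_tsum _ fun k _ => hn _ ?_
      have : 0 ≤ s * (k:ℝ) := by positivity
      simp only [mem_Ici]; linarith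

noncomputable def ff (y : ℝ) : ℝ := Real.exp (-y) / y

lemma ff_anti : AntitoneOn ff (Ioi 0) := by
  intro x hx y hy hxy
  simp only [mem_Ioi] at hx hy
  unfold ff
  gcongr

lemma ff_nonneg {x : ℝ} (hx : 0 < x) : 0 ≤ ff x := by unfold ff; positivity

lemma ff_cont : ContinuousOn ff (Ioi 0) := by
  unfold ff
  refine ContinuousOn.div (by fun_prop) continuousOn_id fun x hx => ne_of_gt hx

lemma ff_le {c : ℝ} (hc : 0 < c) {x : ℝ} (hx : c < x) : ff x ≤ Real.exp (-x) / c := by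
  unfold ff; gcongr

lemma ff_int {c : ℝ} (hc : 0 < c) : IntegrableOn ff (Ioi c) := by
  refine Integrable.mono' ((integrableOn_exp_neg_Ioi c).div_const c) ?_ ?_
  · exact (ff_cont.mono (Ioi_subset_Ioi hc.le)).aestronglyMeasurable measurableSet_Ioi
  · refine (ae_restrict_mem measurableSet_Ioi).mono fun x hx => ?_
    rw [Real.norm_of_nonneg (ff_nonneg (hc.trans hx))]
    exact ff_le hc hx

lemma Efun_eq (x : ℝ) : Efun x = ∫ y in Ioi x, ff y := rfl

lemma Efun_nonneg {x : ℝ} (hx : 0 ≤ x) : 0 ≤ Efun x :=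
  setIntegral_nonneg measurableSet_Ioi fun _ hy => ff_nonneg (hx.trans_lt hy)

lemma Efun_anti : AntitoneOn Efun (Ioi 0) := by
  intro x hx y hy hxy
  have := intervalIntegral.integral_Ioi_sub_Ioi (ff_int hx) hxy
  have h2 : 0 ≤ ∫ t in x..y, ff t := intervalIntegral.integral_nonneg hxy fun t ht =>
    ff_nonneg (lt_of_lt_of_le hx ht.1)
  rw [Efun_eq, Efun_eq]; linarith

lemma Efun_le {x : ℝ} (hx : 0 < x) : Efun x ≤ Real.exp (-x) / x := by
  rw [Efun_eq, ← integral_exp_neg_Ioi x, ← integral_div]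
  exact setIntegral_mono_on (ff_int hx) ((integrableOn_exp_neg_Ioi x).div_const x) measurableSet_Ioi
    fun y hy => ff_le hx hy

lemma Efun_deriv {x : ℝ} (hx : 0 < x) : HasDerivAt Efun (-ff x) x := by
  have hc : 0 < x / 2 := by positivity
  have h1 : HasDerivAt (fun u => ∫ t in (x/2)..u, ff t) (ff x) x := by
    refine intervalIntegral.integral_hasDerivAt_right ?_ ?_ ?_
    · refine (ff_cont.mono ?_).intervalIntegrable
      rw [uIcc_of_le (by linarith)]
      intro t ht; exact lt_of_lt_of_le hc ht.1
    · exact ff_cont.stronglyMeasurableAtFilter isOpen_Ioi _ hx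
    · exact ff_cont.continuousAt (Ioi_mem_nhds hx)
  have h2 := h1.const_sub (Efun (x / 2))
  refine h2.congr_of_eventuallyEq ?_
  filter_upwards [Ioi_mem_nhds (show x / 2 < x by linarith)] with u hu
  have := intervalIntegral.integral_Ioi_sub_Ioi (ff_int hc) (le_of_lt hu)
  rw [Efun_eq, Efun_eq]; linarith

noncomputable def ph (u : ℝ) : ℝ := 1 - Real.exp (-Efun u / 2)

lemma ph_le_one (u : ℝ) : ph u ≤ 1 := by
  unfold ph; have := Real.exp_pos (-Efun u / 2); linarith

lemma ph_nonneg {u : ℝ} (hu : 0 ≤ u) : 0 ≤ ph u := by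
  unfold ph
  have := Efun_nonneg hu
  have : Real.exp (-Efun u / 2) ≤ 1 := Real.exp_le_one_iff.2 (by linarith)
  linarith

lemma ph_anti : AntitoneOn ph (Ioi 0) := by
  intro x hx y hy hxy
  have := Efun_anti hx hy hxy
  unfold ph
  gcongr

lemma ph_le {u : ℝ} (hu : 0 < u) : ph u ≤ Real.exp (-u) / u / 2 := by
  have h1 := Efun_le hu
  have h2 := Real.add_one_le_exp (-Efun u / 2)
  unfold ph; linarith

lemma ph_deriv {x : ℝ} (hx : 0 < x) :
    HasDerivAt ph (-(Real.exp (-Efun x / 2) * ff x / 2)) x := by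
  have := ((((Efun_deriv hx).neg).div_const 2).exp).const_sub 1
  convert! this using 1
  simp; ring

lemma ph_cont : ContinuousOn ph (Ioi 0) := fun _ hx =>
  (ph_deriv hx).continuousAt.continuousWithinAt

lemma ph_int : IntegrableOn ph (Ioi 0) := by
  refine Integrable.mono' ((integrableOn_exp_neg_Ioi 0).const_mul (Real.exp 1)) ?_ ?_
  · exact ph_cont.aestronglyMeasurable measurableSet_Ioi
  · refine (ae_restrict_mem measurableSet_Ioi).mono fun x hx => ?_
    have hx : 0 < x := hx
    rw [Real.norm_of_nonneg (ph_nonneg hx.le)]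
    rcases le_total x 1 with h | h
    · refine (ph_le_one x).trans ?_
      rw [← Real.exp_add]; exact Real.one_le_exp (by linarith)
    · refine (ph_le hx).trans ?_
      have h1 : Real.exp (-x) / x ≤ Real.exp (-x) := div_le_self (Real.exp_pos _).le h
      have h2 : 1 ≤ Real.exp 1 := Real.one_le_exp (by norm_num)
      nlinarith [Real.exp_pos (-x)]

lemma target_int : IntegrableOn (fun x => Real.exp (-(Efun x) / 2 - x)) (Ioi 0) := by
  refine Integrable.mono' (integrableOn_exp_neg_Ioi 0) ?_ ?_
  · refine ContinuousOn.aestronglyMeasurable ?_ measurableSet_Ioi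
    intro x hx
    have := (Efun_deriv hx).continuousAt
    exact ContinuousAt.continuousWithinAt (by fun_prop)
  · refine (ae_restrict_mem measurableSet_Ioi).mono fun x hx => ?_
    rw [Real.norm_of_nonneg (Real.exp_pos _).le]
    have := Efun_nonneg (le_of_lt hx)
    exact Real.exp_le_exp.2 (by linarith)

lemma by_parts : ∫ x in Ioi (0:ℝ), Real.exp (-(Efun x) / 2 - x) = 2 * ∫ x in Ioi (0:ℝ), ph x := by
  have h := integral_Ioi_of_hasDerivAt_of_tendsto (a := 0) (m := 0) (f := fun u => u * ph u)
    (f' := fun u => ph u - Real.exp (-(Efun u) / 2 - u) / 2) ?_ ?_ ?_ ?_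
  · rw [integral_sub ph_int (target_int.div_const 2), integral_div] at h
    simp at h; linarith
  · rw [ContinuousWithinAt]
    simp only [zero_mul]
    refine squeeze_zero_norm' (a := fun u => u) ?_ ?_
    · filter_upwards [self_mem_nhdsWithin] with u hu
      have hu : 0 ≤ u := hu
      rw [Real.norm_of_nonneg (mul_nonneg hu (ph_nonneg hu))]
      exact mul_le_of_le_one_right hu (ph_le_one u)
    · exact (continuous_id.tendsto (0:ℝ)).mono_left nhdsWithin_le_nhds
  · intro x hx
    have hx : 0 < x := hx
    have := (hasDerivAt_id x).mul (ph_deriv hx)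
    convert! this using 1
    unfold ff
    rw [sub_eq_add_neg (-Efun x / 2), Real.exp_add]
    simp; field_simp; ring
  · exact ph_int.sub (target_int.div_const 2)
  · refine squeeze_zero_norm' (a := fun u => Real.exp (-u)) ?_ ?_
    · filter_upwards [eventually_gt_atTop 0] with u hu
      rw [Real.norm_of_nonneg (mul_nonneg hu.le (ph_nonneg hu.le))]
      have h1 := mul_le_mul_of_nonneg_left (ph_le hu) hu.le
      have h2 : u * (Real.exp (-u) / u / 2) = Real.exp (-u) / 2 := by field_simp
      have := Real.exp_pos (-u)
      linarith
    · exact Real.tendsto_exp_neg_atTop_nhds_zero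

/-! Limits -/

lemma RR_exp {s : ℝ} (hs : 0 < s) (k : ℕ) :
    Summable (fun j : ℕ => ff (s * (k + 1) + s * j)) ∧
      RR k (Real.exp (-s)) = s * ∑' j : ℕ, ff (s * (k + 1) + s * j) := by
  have hx : |Real.exp (-s)| < 1 := by
    rw [abs_of_pos (Real.exp_pos _)]; exact Real.exp_lt_one_iff.2 (by linarith)
  have e : ∀ j : ℕ, Real.exp (-s) ^ (k + 1 + j) / ((k:ℝ) + 1 + j) = s * ff (s * (k + 1) + s * j) := by
    intro j
    rw [← Real.exp_nat_mul]
    unfold ff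
    have : (0:ℝ) < k + 1 + j := by positivity
    have h2 : s * (k + 1) + s * (j:ℝ) = s * (k + 1 + j) := by ring
    rw [h2]
    have h3 : ((k + 1 + j : ℕ) : ℝ) * -s = -(s * (k + 1 + j)) := by push_cast; ring
    rw [h3]; field_simp
  have h1 : Summable (fun j : ℕ => Real.exp (-s) ^ (k + 1 + j) / ((k:ℝ) + 1 + j)) := by
    have := (summable_nat_add_iff k).2 (summable_log hx)
    refine this.congr fun j => ?_
    push_cast
    rw [show j + k + 1 = k + 1 + j by ring, show (j:ℝ) + k + 1 = k + 1 + j by ring]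
  constructor
  · have h2 := h1.mul_left s⁻¹
    refine h2.congr fun j => ?_
    rw [e]; field_simp
  · unfold RR
    rw [← tsum_mul_left]
    exact tsum_congr e

lemma RR_lower {s : ℝ} (hs : 0 < s) (k : ℕ) : Efun (s * (k + 1)) ≤ RR k (Real.exp (-s)) := by
  have hc : 0 < s * ((k:ℝ) + 1) := by positivity
  rw [(RR_exp hs k).2, Efun_eq]
  refine riem_lower hs (ff_anti.mono fun x hx => lt_of_lt_of_le hc hx) (ff_int hc)
    (fun x hx => ff_nonneg (lt_of_lt_of_le hc hx)) (RR_exp hs k).1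

lemma RR_upper {s : ℝ} (hs : 0 < s) (k : ℕ) :
    RR (k + 1) (Real.exp (-s)) ≤ Efun (s * (k + 1)) := by
  have hc : 0 < s * ((k:ℝ) + 1) := by positivity
  rw [(RR_exp hs (k + 1)).2, Efun_eq]
  have := (riem_upper hs (ff_anti.mono (Ioi_subset_Ioi hc.le))
    (fun x hx => ff_nonneg (hc.trans hx)) (ff_int hc)).2
  convert! this using 4
  push_cast; ring_nf

noncomputable def SS (x : ℝ) : ℝ := ∑' k, (1 - Real.exp (-RR k x / 2))

lemma HH_pos {x : ℝ} (h0 : 0 ≤ x) (h1 : x < 1) : 0 < HH x := by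
  rw [HH_eq (by rwa [abs_of_nonneg h0])]; exact Real.exp_pos _

lemma one_le_HH {x : ℝ} (h0 : 0 ≤ x) (h1 : x < 1) : 1 ≤ HH x := by
  rw [HH_eq (by rwa [abs_of_nonneg h0])]
  refine Real.one_le_exp ?_
  have := Real.log_nonpos (x := 1 - x) (by linarith) (by linarith)
  linarith

lemma summable_SS {x : ℝ} (h0 : 0 ≤ x) (h1 : x < 1) :
    Summable (fun k => 1 - Real.exp (-RR k x / 2)) :=
  (summable_mul_left_iff (HH_pos h0 h1).ne').1 (key_gf h0 h1).summable

lemma HH_mul_SS {x : ℝ} (h0 : 0 ≤ x) (h1 : x < 1) :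
    HH x * SS x = ∑' n : ℕ, (2 * (n:ℝ) + 1) * hh n * x ^ n * bb n := by
  unfold SS
  rw [← tsum_mul_left]; exact (key_gf h0 h1).tsum_eq

lemma SS_upper {x B : ℝ} (h0 : 0 ≤ x) (h1 : x < 1) (hB : ∀ n, bb n ≤ B) : (1 - x) * SS x ≤ B := by
  have hx : |x| < 1 := by rwa [abs_of_nonneg h0]
  have hw := hasSum_weights hx
  have hp := HH_pos h0 h1
  have hx1 : 0 < 1 - x := by linarith
  have h : HH x * SS x ≤ HH x / (1 - x) * B := by
    rw [HH_mul_SS h0 h1, ← (hw.mul_right B).tsum_eq]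
    have le : ∀ n : ℕ, (2 * (n:ℝ) + 1) * hh n * x ^ n * bb n ≤ (2 * (n:ℝ) + 1) * hh n * x ^ n * B := by
      intro n
      have := hh_pos n
      exact mul_le_mul_of_nonneg_left (hB n) (by positivity)
    refine Summable.tsum_le_tsum le ?_ (hw.mul_right B).summable
    refine Summable.of_nonneg_of_le (fun n => ?_) le (hw.mul_right B).summable
    have := hh_pos n
    have := bb_nonneg n
    positivity
  have h2 : HH x / (1 - x) * B = HH x * (B / (1 - x)) := by field_simp
  rw [h2] at h
  have h3 := le_of_mul_le_mul_left h hp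
  rw [le_div_iff₀ hx1] at h3
  linarith

lemma SS_lower {x : ℝ} (h0 : 0 ≤ x) (h1 : x < 1) (N : ℕ) :
    bb N * (1 - (1 - x) * ∑ n ∈ Finset.range N, (2 * (n:ℝ) + 1)) ≤ (1 - x) * SS x := by
  have hx : |x| < 1 := by rwa [abs_of_nonneg h0]
  have hw := hasSum_weights hx
  have hp := HH_pos h0 h1
  have hp1 := one_le_HH h0 h1
  have hx1 : 0 < 1 - x := by linarith
  set T := ∑ n ∈ Finset.range N, (2 * (n:ℝ) + 1) with hT
  have hT0 : 0 ≤ T := Finset.sum_nonneg fun n _ => by positivity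
  have hnn : ∀ n : ℕ, 0 ≤ (2 * (n:ℝ) + 1) * hh n * x ^ n := fun n => by
    have := hh_pos n; positivity
  have hsm : Summable fun n : ℕ => (2 * (n:ℝ) + 1) * hh n * x ^ n * bb n :=
    Summable.of_nonneg_of_le (fun n => mul_nonneg (hnn n) (bb_nonneg n))
      (fun n => mul_le_of_le_one_right (hnn n) (bb_le n)) hw.summable
  have h : bb N * (HH x / (1 - x) - T) ≤ HH x * SS x := by
    rw [HH_mul_SS h0 h1, ← hsm.sum_add_tsum_nat_add N]
    have e := hw.summable.sum_add_tsum_nat_add N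
    rw [hw.tsum_eq] at e
    have a1 : 0 ≤ ∑ n ∈ Finset.range N, (2 * (n:ℝ) + 1) * hh n * x ^ n * bb n :=
      Finset.sum_nonneg fun n _ => mul_nonneg (hnn n) (bb_nonneg n)
    have a2 : ∑ n ∈ Finset.range N, (2 * (n:ℝ) + 1) * hh n * x ^ n ≤ T := by
      refine Finset.sum_le_sum fun n _ => ?_
      have h3 : hh n * x ^ n ≤ 1 := mul_le_one₀ (hh_le_one n) (by positivity) (pow_le_one₀ h0 h1.le)
      rw [mul_assoc]
      exact mul_le_of_le_one_right (by positivity) h3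
    have s1 := (summable_nat_add_iff N).2 hw.summable
    have s2 := (summable_nat_add_iff N).2 hsm
    have a3 : (∑' n : ℕ, (2 * ((n + N : ℕ):ℝ) + 1) * hh (n + N) * x ^ (n + N)) * bb N ≤
        ∑' n : ℕ, (2 * ((n + N : ℕ):ℝ) + 1) * hh (n + N) * x ^ (n + N) * bb (n + N) := by
      rw [← tsum_mul_right]
      refine Summable.tsum_le_tsum (fun n => ?_) (s1.mul_right _) s2
      exact mul_le_mul_of_nonneg_left (bb_mono (Nat.le_add_left N n)) (hnn _)
    have a4 : bb N * (HH x / (1 - x) - T) ≤ bb N * ∑' n : ℕ, (2 * ((n + N : ℕ):ℝ) + 1) * hh (n + N) * x ^ (n + N) :=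
      mul_le_mul_of_nonneg_left (by linarith) (bb_nonneg N)
    linarith
  have h2 : bb N * (1 - (1 - x) * T) * HH x ≤ (1 - x) * SS x * HH x := by
    have h3 := mul_le_mul_of_nonneg_left h hx1.le
    have h4 : (1 - x) * (bb N * (HH x / (1 - x) - T)) = bb N * (HH x - (1 - x) * T) := by
      field_simp
    rw [h4] at h3
    have h5 : bb N * ((1 - x) * T) ≤ bb N * ((1 - x) * T) * HH x :=
      le_mul_of_one_le_right (mul_nonneg (bb_nonneg N) (by positivity)) hp1
    linarith
  exact le_of_mul_le_mul_right h2 hp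

lemma riem_SS_lower {s : ℝ} (hs : 0 < s) :
    (∫ x in Ioi (0:ℝ), ph x) - s ≤ s * SS (Real.exp (-s)) := by
  have h0 : 0 ≤ Real.exp (-s) := (Real.exp_pos _).le
  have h1 : Real.exp (-s) < 1 := Real.exp_lt_one_iff.2 (by linarith)
  have hsm := (riem_upper hs ph_anti (fun x hx => ph_nonneg (le_of_lt hx)) ph_int).1
  have hsm' : Summable (fun k : ℕ => ph (s + s * k)) := by
    refine hsm.congr fun k => ?_
    congr 1; ring
  have hI : (∫ x in Ioi (0:ℝ), ph x) - ∫ x in Ioi s, ph x ≤ s := by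
    rw [intervalIntegral.integral_Ioi_sub_Ioi ph_int hs.le, intervalIntegral.integral_of_le hs.le]
    calc _ ≤ ∫ x in Ioc 0 s, (1:ℝ) := setIntegral_mono_on (ph_int.mono_set Ioc_subset_Ioi_self)
            (by simp) measurableSet_Ioc fun x _ => ph_le_one x
      _ = s := by simp [hs.le]
  have h2 := riem_lower hs (ph_anti.mono fun x hx => lt_of_lt_of_le hs hx)
    (ph_int.mono_set (Ioi_subset_Ioi hs.le)) (fun x hx => ph_nonneg (hs.le.trans hx)) hsm'
  have h3 : ∑' k : ℕ, ph (s + s * k) ≤ SS (Real.exp (-s)) := by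
    refine Summable.tsum_le_tsum (fun k => ?_) hsm' (summable_SS h0 h1)
    have := RR_lower hs k
    rw [show s + s * (k:ℝ) = s * (k + 1) by ring]
    unfold ph
    gcongr
  have := mul_le_mul_of_nonneg_left h3 hs.le
  linarith

lemma riem_SS_upper {s : ℝ} (hs : 0 < s) :
    s * SS (Real.exp (-s)) ≤ (∫ x in Ioi (0:ℝ), ph x) + s := by
  have h0 : 0 ≤ Real.exp (-s) := (Real.exp_pos _).le
  have h1 : Real.exp (-s) < 1 := Real.exp_lt_one_iff.2 (by linarith)
  obtain ⟨hsm, hle⟩ := riem_upper hs ph_anti (fun x hx => ph_nonneg (le_of_lt hx)) ph_int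
  have h3 : SS (Real.exp (-s)) ≤ 1 + ∑' k : ℕ, ph (0 + s * (k + 1)) := by
    unfold SS
    rw [(summable_SS h0 h1).tsum_eq_zero_add]
    refine add_le_add ?_ ?_
    · have := Real.exp_pos (-RR 0 (Real.exp (-s)) / 2); linarith
    · refine Summable.tsum_le_tsum (fun k => ?_) ((summable_nat_add_iff 1).2 (summable_SS h0 h1)) hsm
      have := RR_upper hs k
      rw [zero_add]
      unfold ph
      gcongr
  have := mul_le_mul_of_nonneg_left h3 hs.le
  linarith

lemma tendsto_SS : Tendsto (fun s : ℝ => (1 - Real.exp (-s)) * SS (Real.exp (-s))) (𝓝[>] 0)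
    (𝓝 (∫ x in Ioi (0:ℝ), ph x)) := by
  set C := ∫ x in Ioi (0:ℝ), ph x
  have hid : Tendsto (fun s : ℝ => s) (𝓝[>] 0) (𝓝 0) := tendsto_id.mono_left nhdsWithin_le_nhds
  have h1 : Tendsto (fun s : ℝ => s * SS (Real.exp (-s))) (𝓝[>] 0) (𝓝 C) := by
    refine tendsto_of_tendsto_of_tendsto_of_le_of_le' (g := fun s => C - s) (h := fun s => C + s) ?_ ?_ ?_ ?_
    · simpa using hid.const_sub C
    · simpa using hid.const_add C
    · filter_upwards [self_mem_nhdsWithin] with s hs using riem_SS_lower hs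
    · filter_upwards [self_mem_nhdsWithin] with s hs using riem_SS_upper hs
  have h2 : Tendsto (fun s : ℝ => (1 - Real.exp (-s)) / s) (𝓝[>] 0) (𝓝 1) := by
    have hd : HasDerivAt (fun s : ℝ => 1 - Real.exp (-s)) 1 0 := by
      have := ((hasDerivAt_neg (0:ℝ)).exp).const_sub 1
      simpa using this
    have := (hasDerivAt_iff_tendsto_slope.1 hd).mono_left
      (nhdsWithin_mono 0 (fun x (hx : 0 < x) => ne_of_gt hx))
    refine this.congr fun s => ?_
    simp [slope_def_field]
  have h3 := h2.mul h1
  rw [one_mul] at h3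
  refine h3.congr' ?_
  filter_upwards [self_mem_nhdsWithin] with s hs
  have hs : 0 < s := hs
  field_simp

lemma bb_tendsto : Tendsto bb atTop (𝓝 (∫ x in Ioi (0:ℝ), ph x)) := by
  refine tendsto_atTop_isLUB bb_mono ⟨?_, ?_⟩
  · rintro _ ⟨N, rfl⟩
    have h : Tendsto (fun s : ℝ => bb N * (1 - (1 - Real.exp (-s)) * ∑ n ∈ Finset.range N, (2 * (n:ℝ) + 1)))
        (𝓝[>] 0) (𝓝 (bb N)) := by
      have hc : Continuous (fun s : ℝ => bb N * (1 - (1 - Real.exp (-s)) * ∑ n ∈ Finset.range N, (2 * (n:ℝ) + 1))) := by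
        fun_prop
      have := (hc.tendsto 0).mono_left (nhdsWithin_le_nhds (s := Ioi 0))
      simpa using this
    refine le_of_tendsto_of_tendsto h tendsto_SS ?_
    filter_upwards [self_mem_nhdsWithin] with s hs
    have hs : 0 < s := hs
    exact SS_lower (Real.exp_pos _).le (Real.exp_lt_one_iff.2 (by linarith)) N
  · intro B hB
    refine le_of_tendsto tendsto_SS ?_
    filter_upwards [self_mem_nhdsWithin] with s hs
    have hs : 0 < s := hs
    exact SS_upper (Real.exp_pos _).le (Real.exp_lt_one_iff.2 (by linarith)) fun n => hB ⟨n, rfl⟩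

lemma main : Tendsto (fun n : ℕ => ExM n / n) atTop
    (𝓝 (∫ x in Ioi (0 : ℝ), Real.exp (-(Efun x) / 2 - x))) := by
  rw [by_parts]
  have h1 : Tendsto (fun n : ℕ => 2 + 1 / (n:ℝ)) atTop (𝓝 2) := by
    simpa using (tendsto_one_div_atTop_nhds_zero_nat (𝕜 := ℝ)).const_add 2
  refine (h1.mul bb_tendsto).congr' ?_
  filter_upwards [eventually_gt_atTop 0] with n hn
  have : (0:ℝ) < n := by exact_mod_cast hn
  unfold bb
  field_simp

end Limits

end CycProof

/-- `Ex[M_n] ∼ (∫_0^∞ e^{−E(x)/2 − x} dx) · n` as `n → ∞`: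
the expected length of the longest cycle of a random `n`-cyclation, divided by `n`,
tends to `∫_0^∞ e^{−E(x)/2 − x} dx`. -/
theorem expected_longest_cycle_asymptotic :
    Filter.Tendsto (fun n : ℕ => ExM n / n) Filter.atTop
      (nhds (∫ x in Set.Ioi (0 : ℝ), Real.exp (-(Efun x) / 2 - x))) := by
  exact CycProof.main
end
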